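/- Let (t_k) be a sequence of positive reals with t_k → 0, and for each k let (x^k,y^k) be a nondegenerate Karush–Kuhn–Tucker point of the Scholtes-type regularization S(t_k), all with the same quadratic index m. Suppose (x^k,y^k) → (x̄,ȳ), where (x̄,ȳ) is a nondegenerate T-stationary point of the regularized continuous reformulation R with (unique) multipliers (λ̄,μ̄,σ̄,ϱ̄) and T-index TI. Then max{ m − |{i ∈ a01(x̄,ȳ) : σ̄_{1,i} = 0}| , 0 } ≤ TI ≤ m. -/

import Mathlib

open scoped Classical
open Finset Filter Topology

noncomputable section
namespace Scholtes

/-- Vectors in ℝⁿ. -/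
abbrev Vec (n : ℕ) := Fin n → ℝ

variable {n : ℕ} {P Q : Type*} [Fintype P] [Fintype Q]

/-- Euclidean dot product. -/
def dot (u v : Vec n) : ℝ := ∑ i, u i * v i

/-- Gradient: vector of partial derivatives. -/
def grad (f : Vec n → ℝ) (x : Vec n) : Vec n := fun i => fderiv ℝ f x (Pi.single i 1)

/-- Hessian bilinear form of `L` at `z`, evaluated at directions `ξ`, `ζ`. -/
def hess (L : Vec n × Vec n → ℝ) (z ξ ζ : Vec n × Vec n) : ℝ :=
  fderiv ℝ (fun w => fderiv ℝ L w ξ) z ζ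

/-- The pair vector (e_i, 0) ∈ ℝ²ⁿ. -/
def ex (i : Fin n) : Vec n × Vec n := (Pi.single i 1, 0)

/-- The pair vector (0, e_i) ∈ ℝ²ⁿ. -/
def ey (i : Fin n) : Vec n × Vec n := (0, Pi.single i 1)

/-- The pair vector (0, e) ∈ ℝ²ⁿ, where e is the all-ones vector. -/
def eAll : Vec n × Vec n := (0, fun _ => 1)

/-- The pair vector (y_i e_i, x_i e_i) ∈ ℝ²ⁿ. -/
def hvec (x y : Vec n) (i : Fin n) : Vec n × Vec n := (Pi.single i (y i), Pi.single i (x i))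

/-- The number of negative eigenvalues of the bilinear form `B` restricted to the
(sub)space `T`, expressed as the maximal dimension of a linear subspace of `T` on
which the associated quadratic form is negative definite. -/
def negIndex (B : (Vec n × Vec n) → (Vec n × Vec n) → ℝ) (T : (Vec n × Vec n) → Prop) : ℕ :=
  sSup {d : ℕ | ∃ W : Submodule ℝ (Vec n × Vec n),
    (∀ ξ ∈ W, T ξ) ∧ Module.finrank ℝ W = d ∧ ∀ ξ ∈ W, ξ ≠ 0 → B ξ ξ < 0}

/-- The data and standing assumptions of the paper: objective `f`, equality
constraints `h`, inequality constraints `g`, positive pairwise different linear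
coefficients `c`, cardinality bound `s` and regularization parameter `ε`. -/
structure Setting (n : ℕ) (P Q : Type*) [Fintype P] [Fintype Q] where
  f : Vec n → ℝ
  h : P → Vec n → ℝ
  g : Q → Vec n → ℝ
  c : Vec n
  s : ℕ
  ε : ℝ
  hn : 1 ≤ n
  hf : ContDiff ℝ 2 f
  hh : ∀ p, ContDiff ℝ 2 (h p)
  hg : ∀ q, ContDiff ℝ 2 (g q)
  hcpos : ∀ i, 0 < c i
  hcinj : Function.Injective c
  hs : s < n
  hεpos : 0 < ε
  hεle : ε ≤ 1 / ((n : ℝ) - s)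

/-- Index set a01: x̄_i = 0, ȳ_i > 0. -/
def a01 (x y : Vec n) : Finset (Fin n) := univ.filter fun i => x i = 0 ∧ 0 < y i

/-- Index set a10: x̄_i ≠ 0, ȳ_i = 0. -/
def a10 (x y : Vec n) : Finset (Fin n) := univ.filter fun i => x i ≠ 0 ∧ y i = 0

/-- Index set a00: x̄_i = 0, ȳ_i = 0. -/
def a00 (x y : Vec n) : Finset (Fin n) := univ.filter fun i => x i = 0 ∧ y i = 0

/-- Index set N(y): y_i = 0. -/
def Nact (y : Vec n) : Finset (Fin n) := univ.filter fun i => y i = 0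

/-- Index set H≥(x,y): x_i y_i = −t. -/
def Hge (t : ℝ) (x y : Vec n) : Finset (Fin n) := univ.filter fun i => x i * y i = -t

/-- Index set H≤(x,y): x_i y_i = t. -/
def Hle (t : ℝ) (x y : Vec n) : Finset (Fin n) := univ.filter fun i => x i * y i = t

/-- Index set H(x,y) = H≥ ∪ H≤. -/
def Hact (t : ℝ) (x y : Vec n) : Finset (Fin n) := Hge t x y ∪ Hle t x y

/-- Active inequality constraints Q0(x). -/
def Q0 (D : Setting n P Q) (x : Vec n) : Finset Q := univ.filter fun q => D.g q x = 0

/-- Active upper bounds E(y): y_i = 1 + ε. -/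
def Eact (D : Setting n P Q) (y : Vec n) : Finset (Fin n) := univ.filter fun i => y i = 1 + D.ε

/-- Index set O(x,y) = complement of E(y) ∪ N(y) ∪ H(x,y). -/
def Oact (D : Setting n P Q) (t : ℝ) (x y : Vec n) : Finset (Fin n) :=
  (Eact D y ∪ Nact y ∪ Hact t x y)ᶜ

/-- Feasibility for the regularized continuous reformulation R. -/
def feasR (D : Setting n P Q) (x y : Vec n) : Prop :=
  (∀ p, D.h p x = 0) ∧ (∀ q, 0 ≤ D.g q x) ∧ ((n : ℝ) - D.s ≤ ∑ i, y i) ∧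
  (∀ i, x i * y i = 0) ∧ (∀ i, 0 ≤ y i ∧ y i ≤ 1 + D.ε)

/-- Feasibility for the Scholtes-type regularization S(t). -/
def feasS (D : Setting n P Q) (t : ℝ) (x y : Vec n) : Prop :=
  (∀ p, D.h p x = 0) ∧ (∀ q, 0 ≤ D.g q x) ∧ ((n : ℝ) - D.s ≤ ∑ i, y i) ∧
  (∀ i, -t ≤ x i * y i ∧ x i * y i ≤ t) ∧ (∀ i, 0 ≤ y i ∧ y i ≤ 1 + D.ε)

/-- Multipliers for T-stationarity (defined on the whole index ranges). -/
structure TMult (n : ℕ) (P Q : Type*) where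
  lam : P → ℝ
  mu1 : Q → ℝ
  mu2 : Fin n → ℝ
  mu3 : ℝ
  sig1 : Fin n → ℝ
  sig2 : Fin n → ℝ
  rho1 : Fin n → ℝ
  rho2 : Fin n → ℝ

/-- The T-stationarity equation (1) of Definition 2. -/
def TStatEq (D : Setting n P Q) (x y : Vec n) (M : TMult n P Q) : Prop :=
  ((grad D.f x, D.c) : Vec n × Vec n) =
    (∑ p, M.lam p • ((grad (D.h p) x, (0 : Vec n)) : Vec n × Vec n))
    + (∑ q ∈ Q0 D x, M.mu1 q • ((grad (D.g q) x, (0 : Vec n)) : Vec n × Vec n))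
    - (∑ i ∈ Eact D y, M.mu2 i • ey i)
    + M.mu3 • eAll
    + (∑ i ∈ a01 x y, M.sig1 i • ex i)
    + (∑ i ∈ a10 x y, M.sig2 i • ey i)
    + (∑ i ∈ a00 x y, (M.rho1 i • ex i + M.rho2 i • ey i))

/-- (x,y) is a T-stationary point of R with multipliers M. -/
def TStatAt (D : Setting n P Q) (x y : Vec n) (M : TMult n P Q) : Prop :=
  feasR D x y ∧
  (∀ q ∈ Q0 D x, 0 ≤ M.mu1 q) ∧
  (∀ i ∈ Eact D y, 0 ≤ M.mu2 i) ∧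
  0 ≤ M.mu3 ∧
  M.mu3 * ((∑ i, y i) - ((n : ℝ) - D.s)) = 0 ∧
  (∀ i ∈ a00 x y, M.rho1 i = 0 ∨ M.rho2 i ≤ 0) ∧
  TStatEq D x y M

/-- (x,y) is a T-stationary point of R. -/
def TStat (D : Setting n P Q) (x y : Vec n) : Prop := ∃ M, TStatAt D x y M

/-- MPOC-tailored LICQ at a feasible point (x,y) of R: the indicated family of
vectors in ℝ²ⁿ is linearly independent. -/
def MPOC_LICQ (D : Setting n P Q) (x y : Vec n) : Prop :=
  ∀ (lam : P → ℝ) (mu1 : Q → ℝ) (mu2 : Fin n → ℝ) (mu3 : ℝ) (s1 s2 : Fin n → ℝ),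
    ((∑ i, y i) ≠ (n : ℝ) - D.s → mu3 = 0) →
    (∑ p, lam p • ((grad (D.h p) x, (0 : Vec n)) : Vec n × Vec n))
    + (∑ q ∈ Q0 D x, mu1 q • ((grad (D.g q) x, (0 : Vec n)) : Vec n × Vec n))
    + (∑ i ∈ Eact D y, mu2 i • ey i)
    + mu3 • eAll
    + (∑ i ∈ a01 x y ∪ a00 x y, s1 i • ex i)
    + (∑ i ∈ a10 x y ∪ a00 x y, s2 i • ey i) = 0 →
    (∀ p, lam p = 0) ∧ (∀ q ∈ Q0 D x, mu1 q = 0) ∧ (∀ i ∈ Eact D y, mu2 i = 0) ∧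
    mu3 = 0 ∧ (∀ i ∈ a01 x y ∪ a00 x y, s1 i = 0) ∧ (∀ i ∈ a10 x y ∪ a00 x y, s2 i = 0)

/-- The Lagrange function L^R associated with the T-stationary point (x̄,ȳ)
and multipliers M. -/
def LagR (D : Setting n P Q) (xb yb : Vec n) (M : TMult n P Q) (z : Vec n × Vec n) : ℝ :=
  D.f z.1 + dot D.c z.2
    - (∑ p, M.lam p * D.h p z.1)
    - (∑ q ∈ Q0 D xb, M.mu1 q * D.g q z.1)
    + (∑ i ∈ Eact D yb, M.mu2 i * (z.2 i - (1 + D.ε)))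
    - M.mu3 * ((∑ i, z.2 i) - ((n : ℝ) - D.s))
    - (∑ i ∈ a01 xb yb, M.sig1 i * z.1 i)
    - (∑ i ∈ a10 xb yb, M.sig2 i * z.2 i)
    - (∑ i ∈ a00 xb yb, (M.rho1 i * z.1 i + M.rho2 i * z.2 i))

/-- Membership in the tangent space T^R at (x̄,ȳ). -/
def inTR (D : Setting n P Q) (x y : Vec n) (ξ : Vec n × Vec n) : Prop :=
  (∀ p, dot (grad (D.h p) x) ξ.1 = 0) ∧
  (∀ q ∈ Q0 D x, dot (grad (D.g q) x) ξ.1 = 0) ∧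
  (∀ i ∈ Eact D y, ξ.2 i = 0) ∧
  ((∑ i, y i) = (n : ℝ) - D.s → (∑ i, ξ.2 i) = 0) ∧
  (∀ i ∈ a00 x y ∪ a01 x y, ξ.1 i = 0) ∧
  (∀ i ∈ a00 x y ∪ a10 x y, ξ.2 i = 0)

/-- Nondegenerate T-stationary point with multipliers M (NDT1–NDT4). -/
def NondegTStatAt (D : Setting n P Q) (x y : Vec n) (M : TMult n P Q) : Prop :=
  TStatAt D x y M ∧
  MPOC_LICQ D x y ∧
  (∀ q ∈ Q0 D x, 0 < M.mu1 q) ∧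
  (∀ i ∈ Eact D y, 0 < M.mu2 i) ∧
  ((∑ i, y i) = (n : ℝ) - D.s → 0 < M.mu3) ∧
  (∀ i ∈ a00 x y, M.rho1 i ≠ 0 ∧ M.rho2 i < 0) ∧
  (∀ ξ, inTR D x y ξ → (∀ ζ, inTR D x y ζ → hess (LagR D x y M) (x, y) ξ ζ = 0) → ξ = 0)

/-- T-index: quadratic index (number of negative eigenvalues of the restricted
Hessian of L^R) plus the biactive index |a00|. -/
def TIndex (D : Setting n P Q) (x y : Vec n) (M : TMult n P Q) : ℕ :=
  negIndex (hess (LagR D x y M) (x, y)) (inTR D x y) + (a00 x y).card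

/-- Multipliers for KKT points of S(t) (defined on the whole index ranges). -/
structure SMult (n : ℕ) (P Q : Type*) where
  lam : P → ℝ
  mu1 : Q → ℝ
  mu2 : Fin n → ℝ
  mu3 : ℝ
  etaGe : Fin n → ℝ
  etaLe : Fin n → ℝ
  nu : Fin n → ℝ

/-- The KKT equation for S(t). -/
def KKTEq (D : Setting n P Q) (t : ℝ) (x y : Vec n) (M : SMult n P Q) : Prop :=
  ((grad D.f x, D.c) : Vec n × Vec n) =
    (∑ p, M.lam p • ((grad (D.h p) x, (0 : Vec n)) : Vec n × Vec n))
    + (∑ q ∈ Q0 D x, M.mu1 q • ((grad (D.g q) x, (0 : Vec n)) : Vec n × Vec n))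
    - (∑ i ∈ Eact D y, M.mu2 i • ey i)
    + M.mu3 • eAll
    + (∑ i ∈ Hge t x y, M.etaGe i • hvec x y i)
    - (∑ i ∈ Hle t x y, M.etaLe i • hvec x y i)
    + (∑ i ∈ Nact y, M.nu i • ey i)

/-- (x,y) is a KKT point of S(t) with multipliers M. -/
def KKTAt (D : Setting n P Q) (t : ℝ) (x y : Vec n) (M : SMult n P Q) : Prop :=
  feasS D t x y ∧
  (∀ q ∈ Q0 D x, 0 ≤ M.mu1 q) ∧
  (∀ i ∈ Eact D y, 0 ≤ M.mu2 i) ∧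
  0 ≤ M.mu3 ∧
  M.mu3 * ((∑ i, y i) - ((n : ℝ) - D.s)) = 0 ∧
  (∀ i ∈ Hge t x y, 0 ≤ M.etaGe i) ∧
  (∀ i ∈ Hle t x y, 0 ≤ M.etaLe i) ∧
  (∀ i ∈ Nact y, 0 ≤ M.nu i) ∧
  KKTEq D t x y M

/-- (x,y) is a KKT point of S(t). -/
def KKT (D : Setting n P Q) (t : ℝ) (x y : Vec n) : Prop := ∃ M, KKTAt D t x y M

/-- LICQ at a feasible point (x,y) of S(t). -/
def LICQ (D : Setting n P Q) (t : ℝ) (x y : Vec n) : Prop :=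
  ∀ (lam : P → ℝ) (mu1 : Q → ℝ) (mu2 : Fin n → ℝ) (mu3 : ℝ) (eta nu : Fin n → ℝ),
    ((∑ i, y i) ≠ (n : ℝ) - D.s → mu3 = 0) →
    (∑ p, lam p • ((grad (D.h p) x, (0 : Vec n)) : Vec n × Vec n))
    + (∑ q ∈ Q0 D x, mu1 q • ((grad (D.g q) x, (0 : Vec n)) : Vec n × Vec n))
    + (∑ i ∈ Eact D y, mu2 i • ey i)
    + mu3 • eAll
    + (∑ i ∈ Hact t x y, eta i • hvec x y i)
    + (∑ i ∈ Nact y, nu i • ey i) = 0 →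
    (∀ p, lam p = 0) ∧ (∀ q ∈ Q0 D x, mu1 q = 0) ∧ (∀ i ∈ Eact D y, mu2 i = 0) ∧
    mu3 = 0 ∧ (∀ i ∈ Hact t x y, eta i = 0) ∧ (∀ i ∈ Nact y, nu i = 0)

/-- The Lagrange function L^S associated with the KKT point (x̄,ȳ) of S(t)
and multipliers M. -/
def LagS (D : Setting n P Q) (t : ℝ) (xb yb : Vec n) (M : SMult n P Q)
    (z : Vec n × Vec n) : ℝ :=
  D.f z.1 + dot D.c z.2
    - (∑ p, M.lam p * D.h p z.1)
    - (∑ q ∈ Q0 D xb, M.mu1 q * D.g q z.1)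
    + (∑ i ∈ Eact D yb, M.mu2 i * (z.2 i - (1 + D.ε)))
    - M.mu3 * ((∑ i, z.2 i) - ((n : ℝ) - D.s))
    - (∑ i ∈ Hge t xb yb, M.etaGe i * (z.1 i * z.2 i + t))
    + (∑ i ∈ Hle t xb yb, M.etaLe i * (z.1 i * z.2 i - t))
    - (∑ i ∈ Nact yb, M.nu i * z.2 i)

/-- Membership in the tangent space T^S at (x,y) for S(t). -/
def inTS (D : Setting n P Q) (t : ℝ) (x y : Vec n) (ξ : Vec n × Vec n) : Prop :=
  (∀ p, dot (grad (D.h p) x) ξ.1 = 0) ∧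
  (∀ q ∈ Q0 D x, dot (grad (D.g q) x) ξ.1 = 0) ∧
  (∀ i ∈ Eact D y, ξ.2 i = 0) ∧
  ((∑ i, y i) = (n : ℝ) - D.s → (∑ i, ξ.2 i) = 0) ∧
  (∀ i ∈ Hact t x y, y i * ξ.1 i + x i * ξ.2 i = 0) ∧
  (∀ i ∈ Nact y, ξ.2 i = 0)

/-- Nondegenerate KKT point of S(t) with multipliers M (ND1–ND3). -/
def NondegKKTAt (D : Setting n P Q) (t : ℝ) (x y : Vec n) (M : SMult n P Q) : Prop :=
  KKTAt D t x y M ∧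
  LICQ D t x y ∧
  (∀ q ∈ Q0 D x, 0 < M.mu1 q) ∧
  (∀ i ∈ Eact D y, 0 < M.mu2 i) ∧
  (∀ i ∈ Hge t x y, 0 < M.etaGe i) ∧
  (∀ i ∈ Hle t x y, 0 < M.etaLe i) ∧
  (∀ i ∈ Nact y, 0 < M.nu i) ∧
  ((∑ i, y i) = (n : ℝ) - D.s → 0 < M.mu3) ∧
  (∀ ξ, inTS D t x y ξ → (∀ ζ, inTS D t x y ζ → hess (LagS D t x y M) (x, y) ξ ζ = 0) → ξ = 0)

/-- Quadratic index of a KKT point of S(t): number of negative eigenvalues of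
the restricted Hessian of L^S. -/
def QIdx (D : Setting n P Q) (t : ℝ) (x y : Vec n) (M : SMult n P Q) : ℕ :=
  negIndex (hess (LagS D t x y M) (x, y)) (inTS D t x y)

/-- Coefficients with respect to linearly independent vectors depend continuously on the vectors
and on the linear combination. -/
lemma tendsto_coeff_of_linearIndependent {E : Type*} [NormedAddCommGroup E]
    [NormedSpace ℝ E] {ι κ : Type*} [Fintype ι] {l : Filter κ}
    {v : ι → E} (hv : LinearIndependent ℝ v) {w : κ → ι → E}
    (hw : ∀ i, Tendsto (fun k => w k i) l (𝓝 (v i))) {C : κ → ι → ℝ} {c : ι → ℝ}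
    (h : Tendsto (fun k => ∑ i, C k i • w k i) l (𝓝 (∑ i, c i • v i))) (i : ι) :
    Tendsto (fun k => C k i) l (𝓝 (c i)) := by
  have hker : (Fintype.linearCombination ℝ v).ker = ⊥ := by
    rw [LinearMap.ker_eq_bot']
    intro m hm
    exact funext (Fintype.linearIndependent_iff.1 hv m
      (by simpa [Fintype.linearCombination_apply] using hm))
  obtain ⟨K, hK, hanti⟩ := LinearMap.exists_antilipschitzWith _ hker
  have hK' : (0 : ℝ) < K := hK
  have hb : ∀ d : ι → ℝ, ‖d‖ ≤ K * ‖∑ i, d i • v i‖ := fun d => by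
    simpa [Fintype.linearCombination_apply] using hanti.le_mul_dist d 0
  set δ : κ → ℝ := fun k => ∑ i, ‖v i - w k i‖ with hδ
  have hδ0 : Tendsto δ l (𝓝 0) := by
    have : Tendsto δ l (𝓝 (∑ i, ‖v i - v i‖)) :=
      tendsto_finsetSum _ fun i _ => (tendsto_const_nhds.sub (hw i)).norm
    simpa using this
  set r : κ → ℝ := fun k => ‖∑ i, C k i • w k i - ∑ i, c i • v i‖ with hr
  have hr0 : Tendsto r l (𝓝 0) := by
    simpa using (h.sub (tendsto_const_nhds (x := ∑ i, c i • v i))).norm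
  have hest : ∀ k, ‖C k - c‖ ≤ K * ((‖C k - c‖ + ‖c‖) * δ k + r k) := fun k => by
    refine (hb _).trans (mul_le_mul_of_nonneg_left ?_ hK'.le)
    have e : ∑ i, (C k - c) i • v i =
        ∑ i, C k i • (v i - w k i) + (∑ i, C k i • w k i - ∑ i, c i • v i) := by
      simp only [Pi.sub_apply, sub_smul, smul_sub, Finset.sum_sub_distrib]
      abel
    rw [e]
    refine (norm_add_le _ _).trans (add_le_add ?_ le_rfl)
    refine (norm_sum_le _ _).trans ?_
    rw [hδ, Finset.mul_sum]
    refine Finset.sum_le_sum fun i _ => ?_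
    rw [norm_smul]
    refine mul_le_mul_of_nonneg_right ?_ (norm_nonneg _)
    refine (norm_le_pi_norm (C k) i).trans ?_
    simpa using norm_add_le (C k - c) c
  have hsmall : ∀ᶠ k in l, K * δ k < 1 / 2 := by
    have : Tendsto (fun k => K * δ k) l (𝓝 (K * 0)) := hδ0.const_mul _
    rw [mul_zero] at this
    exact this.eventually_lt_const (by norm_num)
  have hfin : Tendsto (fun k => 2 * (K * (‖c‖ * δ k + r k))) l (𝓝 0) := by
    simpa using (((hδ0.const_mul ‖c‖).add hr0).const_mul (K : ℝ)).const_mul 2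
  have hnorm : Tendsto (fun k => ‖C k - c‖) l (𝓝 0) := by
    refine squeeze_zero' (Eventually.of_forall fun _ => norm_nonneg _) ?_ hfin
    filter_upwards [hsmall] with k hk
    have h1 := hest k
    have h2 := mul_le_mul_of_nonneg_left hk.le (norm_nonneg (C k - c))
    nlinarith
  have h1 : Tendsto C l (𝓝 c) := tendsto_iff_norm_sub_tendsto_zero.2 hnorm
  exact (tendsto_pi_nhds.1 h1) i

section QuadraticForms

variable {E : Type*} [NormedAddCommGroup E] [NormedSpace ℝ E] [FiniteDimensional ℝ E]

/-- Fewer linear functionals than the dimension of `W` have a common nonzero zero in `W`. -/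
lemma exists_ne_zero_of_card_lt {ι : Type*} [Fintype ι] (W : Submodule ℝ E) (φ : ι → E →ₗ[ℝ] ℝ)
    (h : Fintype.card ι < Module.finrank ℝ W) : ∃ ξ ∈ W, ξ ≠ 0 ∧ ∀ i, φ i ξ = 0 := by
  have hk : (LinearMap.pi fun i => (φ i).comp W.subtype).ker ≠ ⊥ :=
    LinearMap.ker_ne_bot_of_finrank_lt (by simpa using h)
  obtain ⟨w, hw, hw0⟩ := Submodule.exists_mem_ne_zero_of_ne_bot hk
  refine ⟨w, w.2, by simpa using hw0, fun i => ?_⟩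
  simpa using congrFun (LinearMap.mem_ker.1 hw) i

/-- A subspace of maximal dimension among those of `T` on which `B` is negative definite;
`B` is positive semidefinite on its `B`-orthogonal complement in `T`. -/
lemma exists_maximal_neg (B : E →L[ℝ] E →L[ℝ] ℝ) (hB : ∀ u v, B u v = B v u)
    (T : Submodule ℝ E) :
    ∃ W : Submodule ℝ E, W ≤ T ∧ (∀ ξ ∈ W, ξ ≠ 0 → B ξ ξ < 0) ∧
      (∀ W' : Submodule ℝ E, W' ≤ T → (∀ ξ ∈ W', ξ ≠ 0 → B ξ ξ < 0) →
        Module.finrank ℝ W' ≤ Module.finrank ℝ W) ∧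
      ∀ u ∈ T, (∀ w ∈ W, B u w = 0) → 0 ≤ B u u := by
  set S : Set ℕ := {d | ∃ W : Submodule ℝ E, W ≤ T ∧ (∀ ξ ∈ W, ξ ≠ 0 → B ξ ξ < 0) ∧
    Module.finrank ℝ W = d} with hS
  have hne : S.Nonempty := ⟨0, ⊥, bot_le, by simp, by simp⟩
  have hbd : BddAbove S := ⟨Module.finrank ℝ E, by
    rintro d ⟨W, -, -, rfl⟩; exact Submodule.finrank_le W⟩
  obtain ⟨W, hWT, hneg, hWd⟩ := Nat.sSup_mem hne hbd
  have hmax : ∀ W' : Submodule ℝ E, W' ≤ T → (∀ ξ ∈ W', ξ ≠ 0 → B ξ ξ < 0) →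
      Module.finrank ℝ W' ≤ Module.finrank ℝ W := fun W' h1 h2 =>
    hWd ▸ le_csSup hbd ⟨W', h1, h2, rfl⟩
  refine ⟨W, hWT, hneg, hmax, fun u hu hort => ?_⟩
  by_contra! hlt
  have huW : u ∉ W := fun h => hlt.ne (hort u h)
  have h1 := hmax (W ⊔ Submodule.span ℝ {u})
    (sup_le hWT (by simpa [Submodule.span_le] using hu)) (by
      intro ξ hξ hξ0
      obtain ⟨w, hw, v, hv, rfl⟩ := Submodule.mem_sup.1 hξ
      obtain ⟨a, rfl⟩ := Submodule.mem_span_singleton.1 hv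
      have e : B (w + a • u) (w + a • u) = B w w + a ^ 2 * B u u := by
        simp [hB w u, hort w hw]; ring
      rw [e]
      rcases eq_or_ne a 0 with rfl | ha
      · simpa using hneg w hw (by simpa using hξ0)
      · have h2 : a ^ 2 * B u u < 0 := mul_neg_of_pos_of_neg (by positivity) hlt
        rcases eq_or_ne w 0 with rfl | hw0
        · simpa using h2
        · linarith [hneg w hw hw0])
  have h2 : W < W ⊔ Submodule.span ℝ {u} := by
    refine lt_of_le_of_ne le_sup_left fun h => huW ?_
    rw [h]
    exact Submodule.mem_sup_right (Submodule.mem_span_singleton_self u)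
  exact absurd (Submodule.finrank_lt_finrank_of_lt h2) (by omega)

/-- If `B` is nondegenerate on `T`, then `T` splits `B`-orthogonally into a negative definite
subspace `W` of maximal dimension and a positive definite subspace `V`. -/
lemma exists_neg_pos_splitting (B : E →L[ℝ] E →L[ℝ] ℝ) (hB : ∀ u v, B u v = B v u)
    (T : Submodule ℝ E) (hnd : ∀ u ∈ T, (∀ v ∈ T, B u v = 0) → u = 0) :
    ∃ W V : Submodule ℝ E, W ≤ T ∧ V ≤ T ∧ (∀ ξ ∈ W, ξ ≠ 0 → B ξ ξ < 0) ∧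
      (∀ W' : Submodule ℝ E, W' ≤ T → (∀ ξ ∈ W', ξ ≠ 0 → B ξ ξ < 0) →
        Module.finrank ℝ W' ≤ Module.finrank ℝ W) ∧
      Module.finrank ℝ V + Module.finrank ℝ W ≤ Module.finrank ℝ T ∧
      (∀ u ∈ T, (∀ w ∈ W, B u w = 0) → u ≠ 0 → 0 < B u u) ∧
      (∀ u ∈ T, (∀ v ∈ V, B u v = 0) → u ≠ 0 → B u u < 0) := by
  obtain ⟨W, hWT, hneg, hmax, hpos⟩ := exists_maximal_neg B hB T
  let V : Submodule ℝ E :=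
    { carrier := {u | u ∈ T ∧ ∀ w ∈ W, B u w = 0}
      zero_mem' := ⟨T.zero_mem, by simp⟩
      add_mem' := fun ha hb => ⟨T.add_mem ha.1 hb.1, fun w hw => by
        simp [ha.2 w hw, hb.2 w hw]⟩
      smul_mem' := fun a u hu => ⟨T.smul_mem a hu.1, fun w hw => by simp [hu.2 w hw]⟩ }
  have hVT : V ≤ T := fun u hu => hu.1
  have hsplit : ∀ u ∈ T, ∃ w ∈ W, u - w ∈ V := by
    intro u hu
    let φ : W →ₗ[ℝ] Module.Dual ℝ W :=
      { toFun := fun w => ((B w : E →L[ℝ] ℝ) : E →ₗ[ℝ] ℝ).comp W.subtype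
        map_add' := fun a b => by ext; simp
        map_smul' := fun a b => by ext; simp }
    have hφ : Function.Injective φ := by
      rw [injective_iff_map_eq_zero]
      intro w hw
      by_contra h0
      have := congrArg (fun g => g w) hw
      exact (hneg w w.2 (by simpa using h0)).ne (by simpa [φ] using this)
    have hφs : Function.Surjective φ :=
      (LinearMap.injective_iff_surjective_of_finrank_eq_finrank
        (Subspace.dual_finrank_eq).symm).1 hφ
    obtain ⟨w, hw⟩ := hφs (((B u : E →L[ℝ] ℝ) : E →ₗ[ℝ] ℝ).comp W.subtype)
    refine ⟨w, w.2, T.sub_mem hu (hWT w.2), fun w' hw' => ?_⟩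
    have := congrArg (fun g => g ⟨w', hw'⟩) hw
    have h3 : B w w' = B u w' := by simpa [φ] using this
    simp [h3]
  have hVpos : ∀ u ∈ V, u ≠ 0 → 0 < B u u := by
    intro u hu hu0
    refine lt_of_le_of_ne (hpos u hu.1 hu.2) fun h0 => hu0 (hnd u hu.1 fun v hv => ?_)
    obtain ⟨w, hw, hvw⟩ := hsplit v hv
    have h1 : B u (v - w) = 0 := by
      by_contra hne
      set b := B u (v - w)
      set d := B (v - w) (v - w)
      have key : ∀ a : ℝ, 0 ≤ d + 2 * a * b := fun a => by
        have hm : (v - w) + a • u ∈ V := V.add_mem hvw (V.smul_mem a hu)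
        have h2 := hpos _ hm.1 hm.2
        have e : B ((v - w) + a • u) ((v - w) + a • u) = d + 2 * a * b + a ^ 2 * B u u := by
          simp only [map_add, map_smul, add_apply,
            smul_apply, smul_eq_mul, hB (v - w) u, d, b]
          ring
        rw [e, ← h0] at h2
        linarith
      have h3 := key (-(d + 1) / (2 * b))
      have h4 : 2 * (-(d + 1) / (2 * b)) * b = -(d + 1) := by field_simp
      rw [h4] at h3
      linarith
    have h2 : B u w = 0 := hu.2 w hw
    rw [map_sub, h2, sub_zero] at h1
    exact h1
  refine ⟨W, V, hWT, hVT, hneg, hmax, ?_, fun u hu hw => hVpos u ⟨hu, hw⟩, ?_⟩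
  · have hdis : Disjoint V W := by
      rw [Submodule.disjoint_def]
      intro x hxV hxW
      by_contra h0
      exact (hneg x hxW h0).ne (hxV.2 x hxW)
    have h1 := Submodule.finrank_sup_add_finrank_inf_eq V W
    rw [hdis.eq_bot, finrank_bot, add_zero] at h1
    rw [← h1]
    exact Submodule.finrank_mono (sup_le hVT hWT)
  · intro u hu hv hu0
    obtain ⟨w, hw, huw⟩ := hsplit u hu
    have h1 : u - w = 0 := by
      by_contra h0
      have h2 := hVpos _ huw h0
      have h3 : B (u - w) (u - w) = 0 := by
        rw [hB, map_sub, hB _ u, hv _ huw, huw.2 w hw, sub_zero]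
      exact h2.ne' h3
    rw [sub_eq_zero] at h1
    subst h1
    exact hneg u hw hu0

/-- Eventually existing nonzero vectors can be normalized and have a limit along an ultrafilter. -/
lemma exists_unit_limit (p : ℕ → E → Prop) (hp : ∀ k ξ (a : ℝ), 0 < a → p k ξ → p k (a • ξ))
    (h : ∀ᶠ k in atTop, ∃ ξ, ξ ≠ 0 ∧ p k ξ) :
    ∃ (l : Ultrafilter ℕ) (u : ℕ → E) (ξ : E), (l : Filter ℕ) ≤ atTop ∧ ξ ≠ 0 ∧
      Tendsto u l (𝓝 ξ) ∧ ∀ᶠ k in (l : Filter ℕ), p k (u k) := by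
  have h' : ∀ᶠ k in atTop, ∃ ξ ∈ Metric.sphere (0 : E) 1, p k ξ := by
    filter_upwards [h] with k ⟨ξ, h0, hξ⟩
    have hn : 0 < ‖ξ‖ := norm_pos_iff.2 h0
    refine ⟨‖ξ‖⁻¹ • ξ, ?_, hp k ξ _ (inv_pos.2 hn) hξ⟩
    simp [norm_smul, hn.ne']
  have hev : ∀ᶠ k in atTop, ∃ ξ, ξ ∈ Metric.sphere (0 : E) 1 ∧ p k ξ := h'
  obtain ⟨u, hu⟩ := hev.choice
  let l : Ultrafilter ℕ := Ultrafilter.of atTop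
  have hl : (l : Filter ℕ) ≤ atTop := Ultrafilter.of_le _
  have hul := hu.filter_mono hl
  obtain ⟨ξ, hξ, hlim⟩ := (isCompact_sphere (0 : E) 1).ultrafilter_le_nhds (l.map u) (by
    rw [Ultrafilter.coe_map, le_principal_iff, Filter.mem_map]
    exact hul.mono fun k hk => hk.1)
  refine ⟨l, u, ξ, hl, ?_, hlim, hul.mono fun k hk => hk.2⟩
  rintro rfl
  simp at hξ

end QuadraticForms

section Hessians

variable {L L₁ L₂ : Vec n × Vec n → ℝ} (z ξ ζ : Vec n × Vec n)

lemma hess_eq_fderiv_fderiv (hL : ContDiff ℝ 2 L) :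
    hess L z ξ ζ = fderiv ℝ (fderiv ℝ L) z ζ ξ := by
  have h1 : DifferentiableAt ℝ (fderiv ℝ L) z :=
    (hL.fderiv_right (m := 1) (by norm_num)).differentiable one_ne_zero z
  unfold hess
  rw [fderiv_clm_apply h1 (differentiableAt_const ξ)]
  simp

lemma hess_add (h₁ : ContDiff ℝ 2 L₁) (h₂ : ContDiff ℝ 2 L₂) :
    hess (fun w => L₁ w + L₂ w) z ξ ζ = hess L₁ z ξ ζ + hess L₂ z ξ ζ := by
  rw [hess_eq_fderiv_fderiv z ξ ζ (h₁.add h₂), hess_eq_fderiv_fderiv z ξ ζ h₁,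
    hess_eq_fderiv_fderiv z ξ ζ h₂]
  have e : fderiv ℝ (fun w => L₁ w + L₂ w) = fun w => fderiv ℝ L₁ w + fderiv ℝ L₂ w :=
    funext fun w => fderiv_fun_add (h₁.differentiable two_ne_zero w)
      (h₂.differentiable two_ne_zero w)
  rw [e, fderiv_fun_add ((h₁.fderiv_right (m := 1) (by norm_num)).differentiable one_ne_zero z)
    ((h₂.fderiv_right (m := 1) (by norm_num)).differentiable one_ne_zero z)]
  simp

lemma hess_const_mul (a : ℝ) (h : ContDiff ℝ 2 L) :
    hess (fun w => a * L w) z ξ ζ = a * hess L z ξ ζ := by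
  rw [hess_eq_fderiv_fderiv z ξ ζ (contDiff_const.mul h), hess_eq_fderiv_fderiv z ξ ζ h]
  have e : fderiv ℝ (fun w => a * L w) = fun w => a • fderiv ℝ L w :=
    funext fun w => fderiv_const_mul (h.differentiable two_ne_zero w) a
  rw [e, fderiv_fun_const_smul
    ((h.fderiv_right (m := 1) (by norm_num)).differentiable one_ne_zero z)]
  simp

lemma hess_sub (h₁ : ContDiff ℝ 2 L₁) (h₂ : ContDiff ℝ 2 L₂) :
    hess (fun w => L₁ w - L₂ w) z ξ ζ = hess L₁ z ξ ζ - hess L₂ z ξ ζ := by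
  have e : (fun w => L₁ w - L₂ w) = fun w => L₁ w + (-1) * L₂ w := by
    funext w; ring
  rw [e, hess_add z ξ ζ h₁ (contDiff_const.mul h₂), hess_const_mul z ξ ζ _ h₂]
  ring

lemma hess_const (a : ℝ) : hess (fun _ => a) z ξ ζ = 0 := by
  simp [hess]

lemma hess_sum {ι : Type*} (s : Finset ι) {F : ι → Vec n × Vec n → ℝ}
    (hF : ∀ i, ContDiff ℝ 2 (F i)) :
    hess (fun w => ∑ i ∈ s, F i w) z ξ ζ = ∑ i ∈ s, hess (F i) z ξ ζ := by
  induction s using Finset.induction_on with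
  | empty => simp [hess_const]
  | insert a s ha ih =>
    simp only [Finset.sum_insert ha]
    rw [hess_add z ξ ζ (hF a) (ContDiff.sum fun i _ => hF i), ih]

lemma hess_clm (ℓ : Vec n × Vec n →L[ℝ] ℝ) : hess (fun w => ℓ w) z ξ ζ = 0 := by
  unfold hess
  have e : (fun w => fderiv ℝ (fun w => ℓ w) w ξ) = fun _ => ℓ ξ := by
    funext w
    rw [ContinuousLinearMap.fderiv]
  rw [e]
  simp

lemma hess_coord_fst (i : Fin n) : hess (fun w => w.1 i) z ξ ζ = 0 :=
  hess_clm z ξ ζ ((ContinuousLinearMap.proj i).comp (ContinuousLinearMap.fst ℝ (Vec n) (Vec n)))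

lemma hess_coord_snd (i : Fin n) : hess (fun w => w.2 i) z ξ ζ = 0 :=
  hess_clm z ξ ζ ((ContinuousLinearMap.proj i).comp (ContinuousLinearMap.snd ℝ (Vec n) (Vec n)))

lemma hess_coord_mul (i : Fin n) :
    hess (fun w => w.1 i * w.2 i) z ξ ζ = ζ.1 i * ξ.2 i + ξ.1 i * ζ.2 i := by
  let a : Vec n × Vec n →L[ℝ] ℝ :=
    (ContinuousLinearMap.proj i).comp (ContinuousLinearMap.fst ℝ (Vec n) (Vec n))
  let b : Vec n × Vec n →L[ℝ] ℝ :=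
    (ContinuousLinearMap.proj i).comp (ContinuousLinearMap.snd ℝ (Vec n) (Vec n))
  have e : (fun w => fderiv ℝ (fun w : Vec n × Vec n => w.1 i * w.2 i) w ξ) =
      fun w => a w * b ξ + b w * a ξ := by
    funext w
    have : HasFDerivAt (fun w : Vec n × Vec n => w.1 i * w.2 i) (a w • b + b w • a) w :=
      a.hasFDerivAt.mul b.hasFDerivAt
    rw [this.fderiv]
    simp
  unfold hess
  rw [e]
  have : HasFDerivAt (fun w : Vec n × Vec n => a w * b ξ + b w * a ξ) (b ξ • a + a ξ • b) z :=
    (a.hasFDerivAt.mul_const (b ξ)).add (b.hasFDerivAt.mul_const (a ξ))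
  rw [this.fderiv]
  simp [a, b]
  ring

lemma hess_comp_fst {φ : Vec n → ℝ} (hφ : ContDiff ℝ 2 φ) :
    hess (fun w => φ w.1) z ξ ζ = fderiv ℝ (fderiv ℝ φ) z.1 ζ.1 ξ.1 := by
  have e : (fun w => fderiv ℝ (fun w : Vec n × Vec n => φ w.1) w ξ) =
      fun w => fderiv ℝ φ w.1 ξ.1 := by
    funext w
    have := ((hφ.differentiable two_ne_zero w.1).hasFDerivAt).comp w
      (hasFDerivAt_fst (𝕜 := ℝ) (p := w))
    have h2 := this.fderiv
    simp only [Function.comp_def] at h2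
    rw [h2]
    simp
  unfold hess
  rw [e]
  have h1 : HasFDerivAt (fderiv ℝ φ) (fderiv ℝ (fderiv ℝ φ) z.1) z.1 :=
    ((hφ.fderiv_right (m := 1) (by norm_num)).differentiable one_ne_zero z.1).hasFDerivAt
  have h2 : HasFDerivAt (fun w : Vec n × Vec n => fderiv ℝ φ w.1 ξ.1) _ z :=
    (h1.comp z (hasFDerivAt_fst (𝕜 := ℝ) (p := z))).clm_apply (hasFDerivAt_const ξ.1 z)
  rw [h2.fderiv]
  simp

/-- The Hessian at `x` of `f - ∑ lam p * h p - ∑ q ∈ S, mu q * g q`. -/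
def hessX (D : Setting n P Q) (S : Finset Q) (lam : P → ℝ) (mu : Q → ℝ) (x : Vec n) :
    Vec n →L[ℝ] Vec n →L[ℝ] ℝ :=
  fderiv ℝ (fderiv ℝ D.f) x - (∑ p, lam p • fderiv ℝ (fderiv ℝ (D.h p)) x)
    - ∑ q ∈ S, mu q • fderiv ℝ (fderiv ℝ (D.g q)) x

lemma continuous_fderiv_fderiv {φ : Vec n → ℝ} (hφ : ContDiff ℝ 2 φ) :
    Continuous (fderiv ℝ (fderiv ℝ φ)) :=
  (hφ.fderiv_right (m := 1) (by norm_num)).continuous_fderiv one_ne_zero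

lemma hessX_symm (D : Setting n P Q) (S : Finset Q) (lam : P → ℝ) (mu : Q → ℝ) (x u v : Vec n) :
    hessX D S lam mu x u v = hessX D S lam mu x v u := by
  have key : ∀ φ : Vec n → ℝ, ContDiff ℝ 2 φ →
      fderiv ℝ (fderiv ℝ φ) x u v = fderiv ℝ (fderiv ℝ φ) x v u := fun φ hφ =>
    (hφ.contDiffAt.isSymmSndFDerivAt (by simp)) u v
  simp [hessX, key _ D.hf, fun p => key _ (D.hh p), fun q => key _ (D.hg q)]

lemma tendsto_hessX (D : Setting n P Q) (S : Finset Q) {κ : Type*} {l : Filter κ}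
    {lam : κ → P → ℝ} {mu : κ → Q → ℝ} {x u : κ → Vec n} {lam' : P → ℝ} {mu' : Q → ℝ}
    {x' u' : Vec n} (hlam : ∀ p, Tendsto (fun k => lam k p) l (𝓝 (lam' p)))
    (hmu : ∀ q ∈ S, Tendsto (fun k => mu k q) l (𝓝 (mu' q))) (hx : Tendsto x l (𝓝 x'))
    (hu : Tendsto u l (𝓝 u')) :
    Tendsto (fun k => hessX D S (lam k) (mu k) (x k) (u k) (u k)) l
      (𝓝 (hessX D S lam' mu' x' u' u')) := by
  have key : ∀ φ : Vec n → ℝ, ContDiff ℝ 2 φ →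
      Tendsto (fun k => fderiv ℝ (fderiv ℝ φ) (x k) (u k) (u k)) l
        (𝓝 (fderiv ℝ (fderiv ℝ φ) x' u' u')) := fun φ hφ => by
    have hc := continuous_fderiv_fderiv hφ
    have h2 : Continuous fun q : Vec n × Vec n => fderiv ℝ (fderiv ℝ φ) q.1 q.2 q.2 := by
      fun_prop
    exact (h2.tendsto (x', u')).comp (hx.prodMk_nhds hu)
  simp only [hessX, sub_apply, _root_.sum_apply, smul_apply, smul_eq_mul]
  exact ((key _ D.hf).sub (tendsto_finsetSum _ fun p _ => (hlam p).mul (key _ (D.hh p)))).sub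
    (tendsto_finsetSum _ fun q hq => (hmu q hq).mul (key _ (D.hg q)))

lemma hess_LagR (D : Setting n P Q) (x y : Vec n) (M : TMult n P Q) :
    hess (LagR D x y M) z ξ ζ = hessX D (Q0 D x) M.lam M.mu1 z.1 ζ.1 ξ.1 := by
  have hf := D.hf
  have hh := D.hh
  have hg := D.hg
  unfold LagR dot
  simp (disch := fun_prop) only [hess_add, hess_sub, hess_sum, hess_const_mul, hess_const,
    hess_coord_fst, hess_coord_snd]
  simp [hess_comp_fst, hf, hh, hg, hessX]

/-- The difference of the multipliers of the two bounds on `x i * y i`. -/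
def eta (t : ℝ) (x y : Vec n) (M : SMult n P Q) (i : Fin n) : ℝ :=
  (if i ∈ Hge t x y then M.etaGe i else 0) - (if i ∈ Hle t x y then M.etaLe i else 0)

lemma hess_LagS (D : Setting n P Q) (t : ℝ) (x y : Vec n) (M : SMult n P Q) :
    hess (LagS D t x y M) z ξ ζ = hessX D (Q0 D x) M.lam M.mu1 z.1 ζ.1 ξ.1
      - ∑ i, eta t x y M i * (ζ.1 i * ξ.2 i + ξ.1 i * ζ.2 i) := by
  have hf := D.hf
  have hh := D.hh
  have hg := D.hg
  unfold LagS dot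
  simp (disch := fun_prop) only [hess_add, hess_sub, hess_sum, hess_const_mul, hess_const,
    hess_coord_snd, hess_coord_mul]
  simp only [hess_comp_fst, hf, hh, hg, hessX, eta, sub_mul, Finset.sum_sub_distrib, ite_mul,
    zero_mul, Finset.sum_ite_mem, Finset.univ_inter]
  simp
  ring

end Hessians

section ActiveVectors

/-- The linear subspace `T^R` at `(x, y)`. -/
def tangentR (D : Setting n P Q) (x y : Vec n) : Submodule ℝ (Vec n × Vec n) where
  carrier := {ξ | inTR D x y ξ}
  zero_mem' := by simp [inTR, dot]
  add_mem' := by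
    rintro ξ ζ ⟨h1, h2, h3, h4, h5, h6⟩ ⟨k1, k2, k3, k4, k5, k6⟩
    simp only [dot] at *
    refine ⟨fun p => ?_, fun q hq => ?_, fun i hi => ?_, fun h => ?_, fun i hi => ?_,
      fun i hi => ?_⟩ <;>
    simp_all [dot, mul_add, Finset.sum_add_distrib]
  smul_mem' := by
    rintro a ξ ⟨h1, h2, h3, h4, h5, h6⟩
    simp only [dot] at *
    refine ⟨fun p => ?_, fun q hq => ?_, fun i hi => ?_, fun h => ?_, fun i hi => ?_,
      fun i hi => ?_⟩ <;>
    simp_all [dot, mul_left_comm _ a, ← Finset.mul_sum]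

/-- The linear subspace `T^S` at `(x, y)`. -/
def tangentS (D : Setting n P Q) (t : ℝ) (x y : Vec n) : Submodule ℝ (Vec n × Vec n) where
  carrier := {ξ | inTS D t x y ξ}
  zero_mem' := by simp [inTS, dot]
  add_mem' := by
    rintro ξ ζ ⟨h1, h2, h3, h4, h5, h6⟩ ⟨k1, k2, k3, k4, k5, k6⟩
    refine ⟨fun p => ?_, fun q hq => ?_, fun i hi => ?_, fun h => ?_, fun i hi => ?_,
      fun i hi => ?_⟩
    · have := h1 p; have := k1 p; simp_all [dot, mul_add, Finset.sum_add_distrib]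
    · have := h2 q hq; have := k2 q hq; simp_all [dot, mul_add, Finset.sum_add_distrib]
    · simp [h3 i hi, k3 i hi]
    · simp [Finset.sum_add_distrib, h4 h, k4 h]
    · simp only [Prod.fst_add, Prod.snd_add, Pi.add_apply]
      linear_combination h5 i hi + k5 i hi
    · simp [h6 i hi, k6 i hi]
  smul_mem' := by
    rintro a ξ ⟨h1, h2, h3, h4, h5, h6⟩
    refine ⟨fun p => ?_, fun q hq => ?_, fun i hi => ?_, fun h => ?_, fun i hi => ?_,
      fun i hi => ?_⟩
    · have := h1 p; simp_all [dot, mul_left_comm _ a, ← Finset.mul_sum]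
    · have := h2 q hq; simp_all [dot, mul_left_comm _ a, ← Finset.mul_sum]
    · simp [h3 i hi]
    · simp [← Finset.mul_sum, h4 h]
    · simp only [Prod.smul_fst, Prod.smul_snd, Pi.smul_apply, smul_eq_mul]
      linear_combination a * h5 i hi
    · simp [h6 i hi]

/-- Indices of the constraint gradients occurring in MPOC-LICQ. -/
abbrev ActIdx (D : Setting n P Q) (x y : Vec n) :=
  P ⊕ {q // q ∈ Q0 D x} ⊕ {i // i ∈ Eact D y} ⊕ Unit ⊕ {i // i ∈ a01 x y ∪ a00 x y} ⊕
    {i // i ∈ a10 x y ∪ a00 x y}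

/-- Perturbed constraint gradients; for `x = xb`, `u = 0`, `w = 0` these are the vectors of
MPOC-LICQ at `(xb, yb)`. -/
def actVec (D : Setting n P Q) (xb yb x u w : Vec n) : ActIdx D xb yb → Vec n × Vec n :=
  Sum.elim (fun p => (grad (D.h p) x, 0)) <| Sum.elim (fun q => (grad (D.g q) x, 0)) <|
    Sum.elim (fun i => ey i) <| Sum.elim (fun _ => eAll) <|
      Sum.elim (fun i => ex i + u i • ey i) (fun i => ey i + w i • ex i)

/-- Restriction of full-length coefficients to the active indices. -/
def actCoef (D : Setting n P Q) (xb yb : Vec n) (lam : P → ℝ) (mu1 : Q → ℝ) (mu2 : Fin n → ℝ)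
    (mu3 : ℝ) (s1 s2 : Fin n → ℝ) : ActIdx D xb yb → ℝ :=
  Sum.elim lam <| Sum.elim (fun q => mu1 q) <| Sum.elim (fun i => mu2 i) <|
    Sum.elim (fun _ => mu3) <| Sum.elim (fun i => s1 i) (fun i => s2 i)

lemma sum_actCoef_smul_actVec (D : Setting n P Q) (xb yb x u w : Vec n) (lam : P → ℝ)
    (mu1 : Q → ℝ) (mu2 : Fin n → ℝ) (mu3 : ℝ) (s1 s2 : Fin n → ℝ) :
    ∑ j, actCoef D xb yb lam mu1 mu2 mu3 s1 s2 j • actVec D xb yb x u w j =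
      (∑ p, lam p • ((grad (D.h p) x, (0 : Vec n)) : Vec n × Vec n))
      + (∑ q ∈ Q0 D xb, mu1 q • ((grad (D.g q) x, (0 : Vec n)) : Vec n × Vec n))
      + (∑ i ∈ Eact D yb, mu2 i • ey i) + mu3 • eAll
      + (∑ i ∈ a01 xb yb ∪ a00 xb yb, s1 i • (ex i + u i • ey i))
      + (∑ i ∈ a10 xb yb ∪ a00 xb yb, s2 i • (ey i + w i • ex i)) := by
  rw [← Finset.sum_coe_sort (Q0 D xb), ← Finset.sum_coe_sort (Eact D yb),
    ← Finset.sum_coe_sort (a01 xb yb ∪ a00 xb yb), ← Finset.sum_coe_sort (a10 xb yb ∪ a00 xb yb)]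
  simp only [Fintype.sum_sum_type, actCoef, actVec, Sum.elim_inl, Sum.elim_inr,
    Finset.univ_unique, Finset.sum_singleton]
  abel

lemma linearIndependent_actVec {D : Setting n P Q} {xb yb : Vec n} (h : MPOC_LICQ D xb yb)
    (hsum : ∑ i, yb i = (n : ℝ) - D.s) :
    LinearIndependent ℝ (actVec D xb yb xb 0 0) := by
  rw [Fintype.linearIndependent_iff]
  intro c hc
  let mu1 : Q → ℝ := fun q => if hq : q ∈ Q0 D xb then c (.inr (.inl ⟨q, hq⟩)) else 0
  let mu2 : Fin n → ℝ := fun i =>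
    if hi : i ∈ Eact D yb then c (.inr (.inr (.inl ⟨i, hi⟩))) else 0
  let s1 : Fin n → ℝ := fun i => if hi : i ∈ a01 xb yb ∪ a00 xb yb then
    c (.inr (.inr (.inr (.inr (.inl ⟨i, hi⟩))))) else 0
  let s2 : Fin n → ℝ := fun i => if hi : i ∈ a10 xb yb ∪ a00 xb yb then
    c (.inr (.inr (.inr (.inr (.inr ⟨i, hi⟩))))) else 0
  have e : c = actCoef D xb yb (fun p => c (.inl p)) mu1 mu2
      (c (.inr (.inr (.inr (.inl ()))))) s1 s2 := by
    funext j
    rcases j with p | q | i | j | i | i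
    · rfl
    · simp [actCoef, mu1]
    · simp [actCoef, mu2]
    · rfl
    · simp only [actCoef, Sum.elim_inr, Sum.elim_inl, s1, dif_pos i.2]
    · simp only [actCoef, Sum.elim_inr, s2, dif_pos i.2]
  rw [e, sum_actCoef_smul_actVec] at hc
  simp only [Pi.zero_apply, zero_smul, add_zero] at hc
  obtain ⟨r1, r2, r3, r4, r5, r6⟩ := h _ mu1 mu2 _ s1 s2 (fun h0 => absurd hsum h0) hc
  rw [e]
  rintro (p | q | i | j | i | i)
  · exact r1 p
  · exact r2 q q.2
  · exact r3 i i.2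
  · exact r4
  · exact r5 i i.2
  · exact r6 i i.2

lemma finrank_tangentR_add_card_le {D : Setting n P Q} {xb yb : Vec n} (h : MPOC_LICQ D xb yb)
    (hsum : ∑ i, yb i = (n : ℝ) - D.s) :
    Module.finrank ℝ (tangentR D xb yb) + Fintype.card (ActIdx D xb yb) ≤
      Module.finrank ℝ (Vec n × Vec n) := by
  rw [← finrank_span_eq_card (linearIndependent_actVec h hsum)]
  refine Submodule.finrank_add_finrank_le_of_disjoint ?_
  rw [Submodule.disjoint_def]
  intro ξ hξ hs
  have hp : ∀ v ∈ Submodule.span ℝ (Set.range (actVec D xb yb xb 0 0)),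
      dot v.1 ξ.1 + dot v.2 ξ.2 = 0 := by
    obtain ⟨h1, h2, h3, h4, h5, h6⟩ := hξ
    intro v hv
    induction hv using Submodule.span_induction with
    | mem v hv =>
      obtain ⟨j, rfl⟩ := hv
      rcases j with p | q | i | j | i | i
      · simpa [actVec, dot] using h1 p
      · simpa [actVec, dot] using h2 q q.2
      · simpa [actVec, dot, ey, Pi.single_apply] using h3 i i.2
      · simpa [actVec, dot, eAll] using h4 hsum
      · simpa [actVec, dot, ex, Pi.single_apply] using h5 i (by
          rw [Finset.union_comm]; exact i.2)
      · simpa [actVec, dot, ey, Pi.single_apply] using h6 i (by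
          rw [Finset.union_comm]; exact i.2)
    | zero => simp [dot]
    | add a b _ _ ha hb =>
      simp only [dot, Prod.fst_add, Prod.snd_add, Pi.add_apply, add_mul,
        Finset.sum_add_distrib] at *
      linear_combination ha + hb
    | smul r a _ ha =>
      simp only [dot, Prod.smul_fst, Prod.smul_snd, Pi.smul_apply, smul_eq_mul, mul_assoc,
        ← Finset.mul_sum] at *
      linear_combination r * ha
  have h0 := hp ξ hs
  have n1 : ∀ v : Vec n, 0 ≤ dot v v := fun v => Finset.sum_nonneg fun i _ => mul_self_nonneg _
  have z : ∀ v : Vec n, dot v v = 0 → v = 0 := fun v hv => by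
    funext i
    have := (Finset.sum_eq_zero_iff_of_nonneg fun i _ => mul_self_nonneg (v i)).1 hv i
      (Finset.mem_univ i)
    simpa using this
  exact Prod.ext (z _ (by linarith [n1 ξ.1, n1 ξ.2])) (z _ (by linarith [n1 ξ.1, n1 ξ.2]))

lemma card_ActIdx (D : Setting n P Q) {x y : Vec n} (hxy : ∀ i, x i * y i = 0)
    (hy : ∀ i, 0 ≤ y i) :
    Fintype.card (ActIdx D x y) =
      Fintype.card P + (Q0 D x).card + (Eact D y).card + 1 + n + (a00 x y).card := by
  have d1 : Disjoint (a01 x y) (a00 x y) := by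
    rw [Finset.disjoint_left]; intro i; simp only [a01, a00, Finset.mem_filter]
    exact fun h1 h2 => h1.2.2.ne' h2.2.2
  have d2 : Disjoint (a10 x y) (a00 x y) := by
    rw [Finset.disjoint_left]; intro i; simp +contextual [a10, a00]
  have d3 : Disjoint (a01 x y ∪ a00 x y) (a10 x y) := by
    rw [Finset.disjoint_left]; intro i; simp +contextual [a01, a10, a00]; tauto
  have hU : (a01 x y ∪ a00 x y) ∪ a10 x y = Finset.univ := by
    ext i
    have := hxy i
    rcases (hy i).eq_or_lt with h | h
    · by_cases hx : x i = 0 <;> simp [a01, a10, a00, ← h, hx]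
    · have hx : x i = 0 := (mul_eq_zero.1 this).resolve_right h.ne'
      simp [a01, a10, a00, h, hx]
  have hc := congrArg Finset.card hU
  rw [Finset.card_union_of_disjoint d3, Finset.card_union_of_disjoint d1, Finset.card_univ,
    Fintype.card_fin] at hc
  simp only [Fintype.card_sum, Fintype.card_coe, Fintype.card_unit,
    Finset.card_union_of_disjoint d1, Finset.card_union_of_disjoint d2]
  omega

end ActiveVectors

section Multipliers

lemma KKTEq.coords {D : Setting n P Q} {t : ℝ} {x y : Vec n} {M : SMult n P Q}
    (h : KKTEq D t x y M) (l : Fin n) :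
    (grad D.f x l = (∑ p, M.lam p * grad (D.h p) x l)
        + (∑ q ∈ Q0 D x, M.mu1 q * grad (D.g q) x l) + eta t x y M l * y l) ∧
    (D.c l = -(if l ∈ Eact D y then M.mu2 l else 0) + M.mu3 + eta t x y M l * x l
        + (if l ∈ Nact y then M.nu l else 0)) := by
  have h1 := congrFun (congrArg Prod.fst h) l
  have h2 := congrFun (congrArg Prod.snd h) l
  simp only [ey, eAll, hvec, Prod.smul_mk, Prod.fst_add, Prod.fst_sub, Prod.fst_sum, Prod.snd_add,
    Prod.snd_sub, Prod.snd_sum, Pi.add_apply, Pi.sub_apply, Finset.sum_apply, Pi.smul_apply,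
    Pi.zero_apply, smul_eq_mul, mul_zero, mul_one, Pi.single_apply, mul_ite, Finset.sum_ite_eq,
    Finset.sum_const_zero, add_zero, sub_zero, smul_zero] at h1 h2
  constructor
  · rw [h1, eta]; split_ifs <;> ring
  · rw [h2, eta]; split_ifs <;> ring

lemma TStatEq.coords {D : Setting n P Q} {x y : Vec n} {M : TMult n P Q}
    (h : TStatEq D x y M) (l : Fin n) :
    (grad D.f x l = (∑ p, M.lam p * grad (D.h p) x l)
        + (∑ q ∈ Q0 D x, M.mu1 q * grad (D.g q) x l)
        + (if l ∈ a01 x y then M.sig1 l else 0) + (if l ∈ a00 x y then M.rho1 l else 0)) ∧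
    (D.c l = -(if l ∈ Eact D y then M.mu2 l else 0) + M.mu3
        + (if l ∈ a10 x y then M.sig2 l else 0) + (if l ∈ a00 x y then M.rho2 l else 0)) := by
  have h1 := congrFun (congrArg Prod.fst h) l
  have h2 := congrFun (congrArg Prod.snd h) l
  simp only [ex, ey, eAll, Prod.smul_mk, Prod.mk_add_mk, Prod.fst_add, Prod.fst_sub, Prod.fst_sum,
    Prod.snd_add, Prod.snd_sub, Prod.snd_sum, Pi.add_apply, Pi.sub_apply, Finset.sum_apply,
    Pi.smul_apply, Pi.zero_apply, smul_eq_mul, mul_zero, mul_one, Pi.single_apply, mul_ite,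
    Finset.sum_ite_eq, Finset.sum_const_zero, add_zero, sub_zero, zero_add, smul_zero] at h1 h2
  constructor
  · rw [h1]
  · rw [h2]; ring

lemma actCoef_coords (D : Setting n P Q) (xb yb x u w : Vec n) (lam : P → ℝ)
    (mu1 : Q → ℝ) (mu2 : Fin n → ℝ) (mu3 : ℝ) (s1 s2 : Fin n → ℝ) (l : Fin n) :
    ((∑ j, actCoef D xb yb lam mu1 mu2 mu3 s1 s2 j • actVec D xb yb x u w j).1 l =
      (∑ p, lam p * grad (D.h p) x l) + (∑ q ∈ Q0 D xb, mu1 q * grad (D.g q) x l)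
      + (if l ∈ a01 xb yb ∪ a00 xb yb then s1 l else 0)
      + (if l ∈ a10 xb yb ∪ a00 xb yb then s2 l * w l else 0)) ∧
    ((∑ j, actCoef D xb yb lam mu1 mu2 mu3 s1 s2 j • actVec D xb yb x u w j).2 l =
      (if l ∈ Eact D yb then mu2 l else 0) + mu3
      + (if l ∈ a01 xb yb ∪ a00 xb yb then s1 l * u l else 0)
      + (if l ∈ a10 xb yb ∪ a00 xb yb then s2 l else 0)) := by
  rw [sum_actCoef_smul_actVec]
  simp only [ex, ey, eAll, Prod.smul_mk, Prod.mk_add_mk, Prod.fst_add, Prod.fst_sum,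
    Prod.snd_add, Prod.snd_sum, Pi.add_apply, Finset.sum_apply,
    Pi.smul_apply, smul_eq_mul, mul_zero, mul_one, Pi.single_apply, mul_ite,
    Finset.sum_ite_eq, Finset.sum_const_zero, add_zero, zero_add, smul_zero]
  simp

lemma mem_trichotomy {x y : Vec n} (hxy : ∀ i, x i * y i = 0) (hy : ∀ i, 0 ≤ y i) (i : Fin n) :
    (x i = 0 ∧ 0 < y i ∧ i ∈ a01 x y ∧ i ∉ a10 x y ∧ i ∉ a00 x y) ∨
    (x i ≠ 0 ∧ y i = 0 ∧ i ∉ a01 x y ∧ i ∈ a10 x y ∧ i ∉ a00 x y) ∨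
    (x i = 0 ∧ y i = 0 ∧ i ∉ a01 x y ∧ i ∉ a10 x y ∧ i ∈ a00 x y) := by
  rcases (hy i).eq_or_lt with h | h
  · by_cases hx : x i = 0
    · right; right; simp [a01, a10, a00, hx, ← h]
    · right; left; simp [a01, a10, a00, hx, ← h]
  · have hx : x i = 0 := (mul_eq_zero.1 (hxy i)).resolve_right h.ne'
    left; simp [a01, a10, a00, hx, h, h.ne']

lemma TStatAt.sum_eq {D : Setting n P Q} {x y : Vec n} {M : TMult n P Q}
    (h : TStatAt D x y M) : ∑ i, y i = (n : ℝ) - D.s := by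
  obtain ⟨⟨-, -, hs, hxy, hy⟩, -, hmu2, -, hmu3, -, heq⟩ := h
  by_contra hne
  have h3 : M.mu3 = 0 := (mul_eq_zero.1 hmu3).resolve_right (sub_ne_zero.2 hne)
  have hy0 : ∀ i, y i = 0 := fun i => by
    rcases mem_trichotomy hxy (fun i => (hy i).1) i with ⟨-, -, i1, i2, i3⟩ | h | h
    · have h1 := (heq.coords i).2
      have hc := D.hcpos i
      rw [if_neg i2, if_neg i3, h3] at h1
      split_ifs at h1 with hE
      · linarith [hmu2 i hE]
      · linarith
    · exact h.2.1
    · exact h.2.1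
  simp only [hy0, Finset.sum_const_zero] at hs
  have : (D.s : ℝ) < n := by exact_mod_cast D.hs
  linarith

/-- Some coordinate of `y` lies strictly between its bounds. -/
lemma NondegTStatAt.exists_free {D : Setting n P Q} {x y : Vec n} {M : TMult n P Q}
    (h : NondegTStatAt D x y M) : ∃ j ∈ a01 x y, j ∉ Eact D y := by
  by_contra! hE
  have hsum := h.1.sum_eq
  obtain ⟨⟨-, -, -, hxy, hy⟩, -⟩ := h.1
  have hE0 : ∀ i, y i = 0 → i ∉ Eact D y := fun i hi h' => by
    simp only [Eact, Finset.mem_filter] at h'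
    linarith [D.hεpos, h'.2]
  have := h.2.1 0 0 1 (-1) 0 1 (fun h0 => absurd hsum h0) (by
    refine Prod.ext (funext fun l => ?_) (funext fun l => ?_)
    · simp [ex, ey, eAll, Prod.fst_sum]
    · simp only [ex, ey, eAll, Pi.zero_apply, Pi.one_apply, zero_smul, one_smul,
        Finset.sum_const_zero, zero_add, add_zero, Prod.snd_add, Prod.snd_sum, Pi.add_apply,
        Finset.sum_apply, Prod.smul_snd, Pi.smul_apply, smul_eq_mul, Pi.single_apply,
        Finset.sum_ite_eq, Prod.snd_zero]
      rcases mem_trichotomy hxy (fun i => (hy i).1) l with h | h | h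
      · simp [h, hE l h.2.2.1]
      · simp [h, hE0 l h.2.1]
      · simp [h, hE0 l h.2.1])
  exact absurd this.2.2.2.1 (by norm_num)

lemma NondegTStatAt.sig2_ne_zero {D : Setting n P Q} {x y : Vec n} {M : TMult n P Q}
    (h : NondegTStatAt D x y M) {i : Fin n} (hi : i ∈ a10 x y) : M.sig2 i ≠ 0 := by
  obtain ⟨j, hj, hjE⟩ := h.exists_free
  obtain ⟨⟨-, -, -, hxy, hy⟩, -, -, -, -, -, heq⟩ := h.1
  intro h0
  have hj' := hj
  have hi' := hi
  simp only [a01, a10, Finset.mem_filter] at hj' hi'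
  have hiE : i ∉ Eact D y := fun h' => by
    simp only [Eact, Finset.mem_filter] at h'
    linarith [D.hεpos, h'.2, hi'.2.2]
  have e1 := (heq.coords i).2
  have e2 := (heq.coords j).2
  have hi0 : i ∉ a00 x y := by simp [a00, hi'.2.1]
  have hj0 : j ∉ a00 x y := by simp [a00, hj'.2.2.ne']
  have hj1 : j ∉ a10 x y := by simp [a10, hj'.2.1]
  rw [if_neg hiE, if_pos hi, if_neg hi0, h0] at e1
  rw [if_neg hjE, if_neg hj1, if_neg hj0] at e2
  have hij : i = j := D.hcinj (by rw [e1, e2])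
  subst hij
  exact hj1 hi

lemma continuous_grad {φ : Vec n → ℝ} (hφ : ContDiff ℝ 2 φ) : Continuous (grad φ) := by
  have := hφ.continuous_fderiv two_ne_zero
  unfold grad
  fun_prop

/-- Limits of the multipliers along a convergent sequence of KKT points. -/
structure MultLimits (D : Setting n P Q) (t : ℕ → ℝ) (X Y : ℕ → Vec n) (Mk : ℕ → SMult n P Q)
    (xb yb : Vec n) (Mb : TMult n P Q) : Prop where
  lam : ∀ p, Tendsto (fun k => (Mk k).lam p) atTop (𝓝 (Mb.lam p))
  mu1 : ∀ q ∈ Q0 D xb, Tendsto (fun k => if q ∈ Q0 D (X k) then (Mk k).mu1 q else 0) atTop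
    (𝓝 (Mb.mu1 q))
  mu2 : ∀ i ∈ Eact D yb, Tendsto (fun k => if i ∈ Eact D (Y k) then (Mk k).mu2 i else 0) atTop
    (𝓝 (Mb.mu2 i))
  mu3 : Tendsto (fun k => (Mk k).mu3) atTop (𝓝 Mb.mu3)
  sig1 : ∀ i ∈ a01 xb yb, Tendsto (fun k => eta (t k) (X k) (Y k) (Mk k) i * Y k i) atTop
    (𝓝 (Mb.sig1 i))
  rho1 : ∀ i ∈ a00 xb yb, Tendsto (fun k => eta (t k) (X k) (Y k) (Mk k) i * Y k i) atTop
    (𝓝 (Mb.rho1 i))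
  sig2 : ∀ i ∈ a10 xb yb, Tendsto (fun k => eta (t k) (X k) (Y k) (Mk k) i * X k i
    + if i ∈ Nact (Y k) then (Mk k).nu i else 0) atTop (𝓝 (Mb.sig2 i))
  rho2 : ∀ i ∈ a00 xb yb, Tendsto (fun k => eta (t k) (X k) (Y k) (Mk k) i * X k i
    + if i ∈ Nact (Y k) then (Mk k).nu i else 0) atTop (𝓝 (Mb.rho2 i))

lemma eventually_Q0_subset (D : Setting n P Q) {X : ℕ → Vec n} {xb : Vec n}
    (hX : Tendsto X atTop (𝓝 xb)) : ∀ᶠ k in atTop, Q0 D (X k) ⊆ Q0 D xb := by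
  have : ∀ᶠ k in atTop, ∀ q, q ∉ Q0 D xb → q ∉ Q0 D (X k) := by
    rw [eventually_all]
    intro q
    by_cases hq : q ∈ Q0 D xb
    · simp [hq]
    · have h1 : D.g q xb ≠ 0 := by simpa [Q0] using hq
      filter_upwards [(((D.hg q).continuous.tendsto xb).comp hX).eventually_ne h1] with k hk
      intro _
      simpa [Q0] using hk
  filter_upwards [this] with k hk q hq
  by_contra h
  exact hk q h hq

lemma eventually_Eact_subset (D : Setting n P Q) {Y : ℕ → Vec n} {yb : Vec n}
    (hY : Tendsto Y atTop (𝓝 yb)) : ∀ᶠ k in atTop, Eact D (Y k) ⊆ Eact D yb := by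
  have : ∀ᶠ k in atTop, ∀ i, i ∉ Eact D yb → i ∉ Eact D (Y k) := by
    rw [eventually_all]
    intro i
    by_cases hi : i ∈ Eact D yb
    · simp [hi]
    · have h1 : yb i ≠ 1 + D.ε := by simpa [Eact] using hi
      filter_upwards [(tendsto_pi_nhds.1 hY i).eventually_ne h1] with k hk
      intro _
      simpa [Eact] using hk
  filter_upwards [this] with k hk i hi
  by_contra h
  exact hk i h hi

lemma tendsto_multipliers (D : Setting n P Q) (t : ℕ → ℝ) (X Y : ℕ → Vec n)
    (Mk : ℕ → SMult n P Q) (hK : ∀ k, KKTAt D (t k) (X k) (Y k) (Mk k)) (xb yb : Vec n)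
    (hX : Tendsto X atTop (𝓝 xb)) (hY : Tendsto Y atTop (𝓝 yb))
    (Mb : TMult n P Q) (hT : TStatAt D xb yb Mb) (hL : MPOC_LICQ D xb yb) :
    MultLimits D t X Y Mk xb yb Mb := by
  have hsum := hT.sum_eq
  obtain ⟨⟨-, -, -, hxy, hy⟩, -, -, -, -, -, heq⟩ := hT
  have htri := mem_trichotomy hxy fun i => (hy i).1
  have hXi := tendsto_pi_nhds.1 hX
  have hYi := tendsto_pi_nhds.1 hY
  set u : ℕ → Vec n := fun k i => if yb i = 0 then 0 else X k i / Y k i with hu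
  set w : ℕ → Vec n := fun k i => if xb i = 0 then 0 else Y k i / X k i with hw
  have hu0 : ∀ i, Tendsto (fun k => u k i) atTop (𝓝 0) := fun i => by
    rcases eq_or_ne (yb i) 0 with h | h
    · simp [hu, h]
    · have hx : xb i = 0 := (mul_eq_zero.1 (hxy i)).resolve_right h
      have h2 : Tendsto (fun k => X k i / Y k i) atTop (𝓝 (xb i / yb i)) := (hXi i).div (hYi i) h
      simpa [hu, h, hx] using h2
  have hw0 : ∀ i, Tendsto (fun k => w k i) atTop (𝓝 0) := fun i => by
    rcases eq_or_ne (xb i) 0 with h | h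
    · simp [hw, h]
    · have hx : yb i = 0 := (mul_eq_zero.1 (hxy i)).resolve_left h
      have h2 : Tendsto (fun k => Y k i / X k i) atTop (𝓝 (yb i / xb i)) := (hYi i).div (hXi i) h
      simpa [hw, h, hx] using h2
  set η : ℕ → Vec n := fun k => eta (t k) (X k) (Y k) (Mk k) with hη
  set C : ℕ → ActIdx D xb yb → ℝ := fun k => actCoef D xb yb (Mk k).lam
    (fun q => if q ∈ Q0 D (X k) then (Mk k).mu1 q else 0)
    (fun i => -(if i ∈ Eact D (Y k) then (Mk k).mu2 i else 0)) (Mk k).mu3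
    (fun i => η k i * Y k i)
    (fun i => η k i * X k i + if i ∈ Nact (Y k) then (Mk k).nu i else 0) with hC
  set c : ActIdx D xb yb → ℝ := actCoef D xb yb Mb.lam Mb.mu1 (fun i => -Mb.mu2 i) Mb.mu3
    (fun i => (if i ∈ a01 xb yb then Mb.sig1 i else 0) + if i ∈ a00 xb yb then Mb.rho1 i else 0)
    (fun i => (if i ∈ a10 xb yb then Mb.sig2 i else 0) + if i ∈ a00 xb yb then Mb.rho2 i else 0)
    with hc
  have hvec : ∀ j, Tendsto (fun k => actVec D xb yb (X k) (u k) (w k) j) atTop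
      (𝓝 (actVec D xb yb xb 0 0 j)) := by
    have hg : ∀ φ : Vec n → ℝ, ContDiff ℝ 2 φ →
        Tendsto (fun k => ((grad φ (X k), 0) : Vec n × Vec n)) atTop (𝓝 (grad φ xb, 0)) :=
      fun φ hφ => (((continuous_grad hφ).tendsto xb).comp hX).prodMk_nhds tendsto_const_nhds
    rintro (p | q | i | j | i | i)
    · exact hg _ (D.hh p)
    · exact hg _ (D.hg q)
    · exact tendsto_const_nhds
    · exact tendsto_const_nhds
    · exact tendsto_const_nhds.add ((hu0 i).smul_const (ey i.1))
    · exact tendsto_const_nhds.add ((hw0 i).smul_const (ex i.1))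
  have hlim : ∑ j, c j • actVec D xb yb xb 0 0 j = (grad D.f xb, D.c) := by
    refine Prod.ext (funext fun l => ?_) (funext fun l => ?_)
    · refine (actCoef_coords D xb yb xb 0 0 _ _ _ _ _ _ l).1.trans ?_
      refine Eq.trans ?_ (heq.coords l).1.symm
      rcases htri l with h | h | h <;> simp [h]
    · refine (actCoef_coords D xb yb xb 0 0 _ _ _ _ _ _ l).2.trans ?_
      refine Eq.trans ?_ (heq.coords l).2.symm
      rcases htri l with h | h | h <;> simp [h] <;> split_ifs <;> ring
  have hev : ∀ᶠ k in atTop, ∑ j, C k j • actVec D xb yb (X k) (u k) (w k) j =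
      (grad D.f (X k), D.c) := by
    have hxne : ∀ᶠ k in atTop, ∀ i, xb i ≠ 0 → X k i ≠ 0 := by
      rw [eventually_all]
      intro i
      rcases eq_or_ne (xb i) 0 with h | h
      · simp [h]
      · filter_upwards [(hXi i).eventually_ne h] with k hk _ using hk
    have hyne : ∀ᶠ k in atTop, ∀ i, yb i ≠ 0 → Y k i ≠ 0 := by
      rw [eventually_all]
      intro i
      rcases eq_or_ne (yb i) 0 with h | h
      · simp [h]
      · filter_upwards [(hYi i).eventually_ne h] with k hk _ using hk
    filter_upwards [eventually_Q0_subset D hX, eventually_Eact_subset D hY, hxne, hyne]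
      with k hQ hE hx0 hy0
    obtain ⟨-, -, -, -, -, -, -, -, hkeq⟩ := hK k
    have hsumQ : ∀ l, ∑ q ∈ Q0 D xb, (if q ∈ Q0 D (X k) then (Mk k).mu1 q else 0) *
        grad (D.g q) (X k) l = ∑ q ∈ Q0 D (X k), (Mk k).mu1 q * grad (D.g q) (X k) l := by
      intro l
      rw [← Finset.sum_subset hQ (fun q _ hq => by simp [hq])]
      exact Finset.sum_congr rfl fun q hq => by simp [hq]
    refine Prod.ext (funext fun l => ?_) (funext fun l => ?_)
    · refine (actCoef_coords D xb yb (X k) (u k) (w k) _ _ _ _ _ _ l).1.trans ?_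
      refine Eq.trans ?_ (hkeq.coords l).1.symm
      rw [hsumQ]
      rcases htri l with h | h | h
      · simp [h, hη]
      · have hX0 := hx0 l h.1
        have e : ((η k l * X k l + if l ∈ Nact (Y k) then (Mk k).nu l else 0) * w k l) =
            η k l * Y k l := by
          by_cases hN : Y k l = 0
          · simp [hw, hN]
          · simp only [Nact, Finset.mem_filter, Finset.mem_univ, true_and, if_neg hN, hw,
              if_neg h.1]
            field_simp
            ring
        simpa [h, hη] using e
      · simp [h, hη, hw]
    · refine (actCoef_coords D xb yb (X k) (u k) (w k) _ _ _ _ _ _ l).2.trans ?_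
      refine Eq.trans ?_ (hkeq.coords l).2.symm
      have e0 : (if l ∈ Eact D yb then -(if l ∈ Eact D (Y k) then (Mk k).mu2 l else 0) else 0) =
          -(if l ∈ Eact D (Y k) then (Mk k).mu2 l else 0) := by
        by_cases h1 : l ∈ Eact D (Y k)
        · simp [h1, hE h1]
        · simp [h1]
      rw [e0]
      rcases htri l with h | h | h
      · have hY0 := hy0 l h.2.1.ne'
        have e : η k l * Y k l * u k l = η k l * X k l := by
          simp only [hu, if_neg h.2.1.ne']
          field_simp
        simpa [h, hη, Nact, hY0] using e
      · simp [h, hη, add_assoc]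
      · simp [h, hη, hu, add_assoc]
  have hmain : Tendsto (fun k => ∑ j, C k j • actVec D xb yb (X k) (u k) (w k) j) atTop
      (𝓝 (∑ j, c j • actVec D xb yb xb 0 0 j)) := by
    rw [hlim]
    refine Tendsto.congr' (hev.mono fun k hk => hk.symm) ?_
    exact (((continuous_grad D.hf).tendsto xb).comp hX).prodMk_nhds tendsto_const_nhds
  have hfin := tendsto_coeff_of_linearIndependent (linearIndependent_actVec hL hsum) hvec hmain
  refine ⟨fun p => hfin (.inl p), fun q hq => hfin (.inr (.inl ⟨q, hq⟩)), fun i hi => ?_,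
    hfin (.inr (.inr (.inr (.inl ())))), fun i hi => ?_, fun i hi => ?_, fun i hi => ?_,
    fun i hi => ?_⟩
  · simpa [hC, hc, actCoef] using (hfin (.inr (.inr (.inl ⟨i, hi⟩)))).neg
  · have h : Tendsto (fun k => η k i * Y k i) atTop
        (𝓝 ((if i ∈ a01 xb yb then Mb.sig1 i else 0) + if i ∈ a00 xb yb then Mb.rho1 i else 0)) :=
      hfin (.inr (.inr (.inr (.inr (.inl ⟨i, Finset.mem_union_left _ hi⟩)))))
    rcases htri i with ⟨-, -, i1, i2, i3⟩ | ⟨-, -, i1, i2, i3⟩ | ⟨-, -, i1, i2, i3⟩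
    · rwa [if_pos i1, if_neg i3, add_zero] at h
    · exact absurd hi i1
    · exact absurd hi i1
  · have h : Tendsto (fun k => η k i * Y k i) atTop
        (𝓝 ((if i ∈ a01 xb yb then Mb.sig1 i else 0) + if i ∈ a00 xb yb then Mb.rho1 i else 0)) :=
      hfin (.inr (.inr (.inr (.inr (.inl ⟨i, Finset.mem_union_right _ hi⟩)))))
    rcases htri i with ⟨-, -, i1, i2, i3⟩ | ⟨-, -, i1, i2, i3⟩ | ⟨-, -, i1, i2, i3⟩
    · exact absurd hi i3
    · exact absurd hi i3
    · rwa [if_neg i1, if_pos i3, zero_add] at h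
  · have h : Tendsto (fun k => η k i * X k i + if i ∈ Nact (Y k) then (Mk k).nu i else 0) atTop
        (𝓝 ((if i ∈ a10 xb yb then Mb.sig2 i else 0) + if i ∈ a00 xb yb then Mb.rho2 i else 0)) :=
      hfin (.inr (.inr (.inr (.inr (.inr ⟨i, Finset.mem_union_left _ hi⟩)))))
    rcases htri i with ⟨-, -, i1, i2, i3⟩ | ⟨-, -, i1, i2, i3⟩ | ⟨-, -, i1, i2, i3⟩
    · exact absurd hi i2
    · rwa [if_pos i2, if_neg i3, add_zero] at h
    · exact absurd hi i2
  · have h : Tendsto (fun k => η k i * X k i + if i ∈ Nact (Y k) then (Mk k).nu i else 0) atTop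
        (𝓝 ((if i ∈ a10 xb yb then Mb.sig2 i else 0) + if i ∈ a00 xb yb then Mb.rho2 i else 0)) :=
      hfin (.inr (.inr (.inr (.inr (.inr ⟨i, Finset.mem_union_right _ hi⟩)))))
    rcases htri i with ⟨-, -, i1, i2, i3⟩ | ⟨-, -, i1, i2, i3⟩ | ⟨-, -, i1, i2, i3⟩
    · exact absurd hi i3
    · exact absurd hi i3
    · rwa [if_neg i2, if_pos i3, zero_add] at h

end Multipliers

section Aligned

/-- The active sets at `(x, y)` agree with those prescribed by the limit point `(xb, yb)`. -/
structure Aligned (D : Setting n P Q) (t : ℝ) (x y xb yb : Vec n) (Mb : TMult n P Q) :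
    Prop where
  Q0_eq : Q0 D x = Q0 D xb
  Eact_eq : Eact D y = Eact D yb
  sum_eq : ∑ i, y i = (n : ℝ) - D.s
  a00_act : ∀ i ∈ a00 xb yb, i ∈ Hact t x y
  a01_pos : ∀ i ∈ a01 xb yb, 0 < y i
  a01_act : ∀ i ∈ a01 xb yb, Mb.sig1 i ≠ 0 → i ∈ Hact t x y
  a10_ne : ∀ i ∈ a10 xb yb, x i ≠ 0
  a10_act : ∀ i ∈ a10 xb yb, i ∈ Hact t x y ∨ y i = 0

lemma mul_ne_zero_of_mem_Hact {t : ℝ} (ht : 0 < t) {x y : Vec n} {i : Fin n}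
    (hi : i ∈ Hact t x y) : x i * y i ≠ 0 := by
  simp only [Hact, Hge, Hle, Finset.mem_union, Finset.mem_filter, Finset.mem_univ,
    true_and] at hi
  rcases hi with h | h <;> rw [h]
  · exact neg_ne_zero.2 ht.ne'
  · exact ht.ne'

lemma eta_eq_zero {P Q : Type*} {t : ℝ} {x y : Vec n} (M : SMult n P Q) {i : Fin n} (hi : i ∉ Hact t x y) :
    eta t x y M i = 0 := by
  simp only [Hact, Finset.mem_union, not_or] at hi
  simp [eta, hi.1, hi.2]

lemma KKTAt.eta_mul_nonpos {D : Setting n P Q} {t : ℝ} {x y : Vec n} {M : SMult n P Q}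
    (h : KKTAt D t x y M) (ht : 0 < t) (i : Fin n) : eta t x y M i * (x i * y i) ≤ 0 := by
  obtain ⟨-, -, -, -, -, hge, hle, -, -⟩ := h
  unfold eta
  split_ifs with h1 h2 h2
  · simp only [Hge, Hle, Finset.mem_filter] at h1 h2
    linarith [h1.2, h2.2]
  · have := hge i h1
    simp only [Hge, Finset.mem_filter] at h1
    rw [h1.2]
    nlinarith
  · have := hle i h2
    simp only [Hle, Finset.mem_filter] at h2
    rw [h2.2]
    nlinarith
  · simp

lemma eta_mul_snd {D : Setting n P Q} {t : ℝ} {x y : Vec n} (M : SMult n P Q)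
    {ξ : Vec n × Vec n} (hξ : ξ ∈ tangentS D t x y) (i : Fin n) :
    y i * (eta t x y M i * (ξ.1 i * ξ.2 i)) = -(eta t x y M i * x i) * ξ.2 i ^ 2 := by
  by_cases hi : i ∈ Hact t x y
  · have h : y i * ξ.1 i + x i * ξ.2 i = 0 := hξ.2.2.2.2.1 i hi
    linear_combination eta t x y M i * ξ.2 i * h
  · simp [eta_eq_zero M hi]

lemma eta_mul_fst {D : Setting n P Q} {t : ℝ} {x y : Vec n} (M : SMult n P Q)
    {ξ : Vec n × Vec n} (hξ : ξ ∈ tangentS D t x y) (i : Fin n) :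
    x i * (eta t x y M i * (ξ.1 i * ξ.2 i)) = -(eta t x y M i * y i) * ξ.1 i ^ 2 := by
  by_cases hi : i ∈ Hact t x y
  · have h : y i * ξ.1 i + x i * ξ.2 i = 0 := hξ.2.2.2.2.1 i hi
    linear_combination eta t x y M i * ξ.1 i * h
  · simp [eta_eq_zero M hi]

lemma KKTAt.eta_mul_mul_nonneg {D : Setting n P Q} {t : ℝ} {x y : Vec n} {M : SMult n P Q}
    (h : KKTAt D t x y M) (ht : 0 < t) {ξ : Vec n × Vec n} (hξ : ξ ∈ tangentS D t x y)
    (i : Fin n) : 0 ≤ eta t x y M i * (ξ.1 i * ξ.2 i) := by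
  by_cases hi : i ∈ Hact t x y
  · have hy : y i ≠ 0 := right_ne_zero_of_mul (mul_ne_zero_of_mem_Hact ht hi)
    have h1 := eta_mul_snd M hξ i
    have h2 := mul_nonneg (neg_nonneg.2 (h.eta_mul_nonpos ht i)) (sq_nonneg (ξ.2 i))
    have h3 : 0 ≤ y i ^ 2 * (eta t x y M i * (ξ.1 i * ξ.2 i)) := by
      linear_combination h2 - y i * h1
    exact nonneg_of_mul_nonneg_right h3 (by positivity)
  · simp [eta_eq_zero M hi]

lemma eventually_forall_mem {ι κ : Type*} [Finite ι] {s : Set ι} {l : Filter κ}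
    {p : ι → κ → Prop} (h : ∀ i ∈ s, ∀ᶠ k in l, p i k) : ∀ᶠ k in l, ∀ i ∈ s, p i k :=
  eventually_all.2 fun i => by
    by_cases hi : i ∈ s
    · filter_upwards [h i hi] with k hk _ using hk
    · simp [hi]

lemma eventually_aligned {D : Setting n P Q} {t : ℕ → ℝ} {X Y : ℕ → Vec n}
    {Mk : ℕ → SMult n P Q} (hK : ∀ k, KKTAt D (t k) (X k) (Y k) (Mk k)) {xb yb : Vec n}
    (hX : Tendsto X atTop (𝓝 xb)) (hY : Tendsto Y atTop (𝓝 yb)) {Mb : TMult n P Q}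
    (hT : NondegTStatAt D xb yb Mb) (hM : MultLimits D t X Y Mk xb yb Mb) :
    ∀ᶠ k in atTop, Aligned D (t k) (X k) (Y k) xb yb Mb := by
  have hsig2 : ∀ i ∈ a10 xb yb, Mb.sig2 i ≠ 0 := fun i hi => hT.sig2_ne_zero hi
  have hsum := hT.1.sum_eq
  obtain ⟨-, -, hmu1, hmu2, hmu3, hrho, -⟩ := hT
  have hXi := tendsto_pi_nhds.1 hX
  have hYi := tendsto_pi_nhds.1 hY
  have e1 := eventually_forall_mem (s := {q | q ∈ Q0 D xb})
    fun q hq => (hM.mu1 q hq).eventually_ne (hmu1 q hq).ne'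
  have e2 := eventually_forall_mem (s := {i | i ∈ Eact D yb})
    fun i hi => (hM.mu2 i hi).eventually_ne (hmu2 i hi).ne'
  have e3 := hM.mu3.eventually_ne (hmu3 hsum).ne'
  have e4 := eventually_forall_mem (s := {i | i ∈ a00 xb yb})
    fun i hi => (hM.rho1 i hi).eventually_ne (hrho i hi).1
  have e5 := eventually_forall_mem (s := {i | i ∈ a01 xb yb}) fun i hi =>
    (hYi i).eventually_const_lt (show 0 < yb i by
      have : i ∈ a01 xb yb := hi
      simp only [a01, Finset.mem_filter] at this
      exact this.2.2)
  have e6 := eventually_forall_mem (s := {i | i ∈ a01 xb yb ∧ Mb.sig1 i ≠ 0})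
    fun i hi => (hM.sig1 i hi.1).eventually_ne hi.2
  have e7 := eventually_forall_mem (s := {i | i ∈ a10 xb yb}) fun i hi =>
    (hXi i).eventually_ne (show xb i ≠ 0 by
      have : i ∈ a10 xb yb := hi
      simp only [a10, Finset.mem_filter] at this
      exact this.2.1)
  have e8 := eventually_forall_mem (s := {i | i ∈ a10 xb yb})
    fun i hi => (hM.sig2 i hi).eventually_ne (hsig2 i hi)
  filter_upwards [e1, e2, e3, e4, e5, e6, e7, e8, eventually_Q0_subset D hX,
    eventually_Eact_subset D hY] with k h1 h2 h3 h4 h5 h6 h7 h8 hQ hE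
  have hact : ∀ i, eta (t k) (X k) (Y k) (Mk k) i ≠ 0 → i ∈ Hact (t k) (X k) (Y k) :=
    fun i hi => by
      by_contra h
      exact hi (eta_eq_zero (Mk k) h)
  refine ⟨hQ.antisymm fun q hq => ?_, hE.antisymm fun i hi => ?_, ?_,
    fun i hi => hact i (left_ne_zero_of_mul (h4 i hi)), h5,
    fun i hi hs => hact i (left_ne_zero_of_mul (h6 i ⟨hi, hs⟩)), h7, fun i hi => ?_⟩
  · by_contra h
    exact h1 q hq (if_neg h)
  · by_contra h
    exact h2 i hi (if_neg h)
  · exact sub_eq_zero.1 ((mul_eq_zero.1 (hK k).2.2.2.2.1).resolve_left h3)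
  · by_contra! h
    exact h8 i hi (by simp [eta_eq_zero (Mk k) h.1, Nact, h.2])

end Aligned

section BilinearForms

/-- The coordinate `x i` on `ℝⁿ × ℝⁿ`. -/
def coordX (i : Fin n) : Vec n × Vec n →L[ℝ] ℝ :=
  (ContinuousLinearMap.proj i).comp (ContinuousLinearMap.fst ℝ (Vec n) (Vec n))

/-- The coordinate `y i` on `ℝⁿ × ℝⁿ`. -/
def coordY (i : Fin n) : Vec n × Vec n →L[ℝ] ℝ :=
  (ContinuousLinearMap.proj i).comp (ContinuousLinearMap.snd ℝ (Vec n) (Vec n))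

@[simp] lemma coordX_apply (i : Fin n) (ξ : Vec n × Vec n) : coordX i ξ = ξ.1 i := rfl

@[simp] lemma coordY_apply (i : Fin n) (ξ : Vec n × Vec n) : coordY i ξ = ξ.2 i := rfl

/-- The Hessian of `L^R` as a continuous bilinear form. -/
def bilR (D : Setting n P Q) (x : Vec n) (M : TMult n P Q) :
    Vec n × Vec n →L[ℝ] Vec n × Vec n →L[ℝ] ℝ :=
  (hessX D (Q0 D x) M.lam M.mu1 x).bilinearComp
    (ContinuousLinearMap.fst ℝ (Vec n) (Vec n)) (ContinuousLinearMap.fst ℝ (Vec n) (Vec n))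

/-- The Hessian of `L^S` as a continuous bilinear form. -/
def bilS (D : Setting n P Q) (t : ℝ) (x y : Vec n) (M : SMult n P Q) :
    Vec n × Vec n →L[ℝ] Vec n × Vec n →L[ℝ] ℝ :=
  (hessX D (Q0 D x) M.lam M.mu1 x).bilinearComp
    (ContinuousLinearMap.fst ℝ (Vec n) (Vec n)) (ContinuousLinearMap.fst ℝ (Vec n) (Vec n))
  - ∑ i, eta t x y M i • ((coordX i).smulRight (coordY i) + (coordY i).smulRight (coordX i))

lemma bilR_apply (D : Setting n P Q) (x : Vec n) (M : TMult n P Q) (ξ ζ : Vec n × Vec n) :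
    bilR D x M ξ ζ = hessX D (Q0 D x) M.lam M.mu1 x ξ.1 ζ.1 := rfl

lemma bilS_apply (D : Setting n P Q) (t : ℝ) (x y : Vec n) (M : SMult n P Q)
    (ξ ζ : Vec n × Vec n) :
    bilS D t x y M ξ ζ = hessX D (Q0 D x) M.lam M.mu1 x ξ.1 ζ.1
      - ∑ i, eta t x y M i * (ξ.1 i * ζ.2 i + ξ.2 i * ζ.1 i) := by
  simp [bilS, mul_add]

lemma bilS_self (D : Setting n P Q) (t : ℝ) (x y : Vec n) (M : SMult n P Q)
    (ξ : Vec n × Vec n) :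
    bilS D t x y M ξ ξ = hessX D (Q0 D x) M.lam M.mu1 x ξ.1 ξ.1
      - 2 * ∑ i, eta t x y M i * (ξ.1 i * ξ.2 i) := by
  rw [bilS_apply, Finset.mul_sum]
  congr 1
  exact Finset.sum_congr rfl fun i _ => by ring

lemma bilR_symm (D : Setting n P Q) (x : Vec n) (M : TMult n P Q) (ξ ζ : Vec n × Vec n) :
    bilR D x M ξ ζ = bilR D x M ζ ξ := by
  rw [bilR_apply, bilR_apply, hessX_symm]

lemma bilS_symm (D : Setting n P Q) (t : ℝ) (x y : Vec n) (M : SMult n P Q)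
    (ξ ζ : Vec n × Vec n) : bilS D t x y M ξ ζ = bilS D t x y M ζ ξ := by
  rw [bilS_apply, bilS_apply, hessX_symm]
  congr 1
  exact Finset.sum_congr rfl fun i _ => by ring

lemma negIndex_eq_finrank {B : Vec n × Vec n → Vec n × Vec n → ℝ} {p : Vec n × Vec n → Prop}
    {C : Vec n × Vec n →L[ℝ] Vec n × Vec n →L[ℝ] ℝ} {T W : Submodule ℝ (Vec n × Vec n)}
    (hB : ∀ ξ, B ξ ξ = C ξ ξ) (hp : ∀ ξ, p ξ ↔ ξ ∈ T) (hWT : W ≤ T)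
    (hneg : ∀ ξ ∈ W, ξ ≠ 0 → C ξ ξ < 0)
    (hmax : ∀ W' : Submodule ℝ (Vec n × Vec n), W' ≤ T → (∀ ξ ∈ W', ξ ≠ 0 → C ξ ξ < 0) →
      Module.finrank ℝ W' ≤ Module.finrank ℝ W) :
    negIndex B p = Module.finrank ℝ W := by
  refine IsGreatest.csSup_eq ⟨⟨W, fun ξ h => (hp ξ).2 (hWT h), rfl, fun ξ h h0 => ?_⟩, ?_⟩
  · rw [hB]
    exact hneg ξ h h0
  · rintro d ⟨W', h1, rfl, h2⟩
    exact hmax W' (fun ξ h => (hp ξ).1 (h1 ξ h)) fun ξ h h0 => by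
      rw [← hB]
      exact h2 ξ h h0

lemma forall_mem_eq_zero {E : Type*} [AddCommGroup E] [Module ℝ E] {W : Submodule ℝ E}
    {ι : Type*} (b : Module.Basis ι ℝ W) (φ : E →ₗ[ℝ] ℝ) (h : ∀ j, φ (b j) = 0) :
    ∀ w ∈ W, φ w = 0 := fun w hw => by
  have : φ.comp W.subtype = 0 := b.ext fun j => by simpa using h j
  simpa using LinearMap.congr_fun this ⟨w, hw⟩

end BilinearForms

section LimitDirections

variable {D : Setting n P Q} {t : ℕ → ℝ} {X Y : ℕ → Vec n} {Mk : ℕ → SMult n P Q}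
  {xb yb : Vec n} {Mb : TMult n P Q} {l : Filter ℕ} {u : ℕ → Vec n × Vec n}
  {ξ : Vec n × Vec n}

/-- Limits of tangent directions of `S(t)` lie in `T^R` as soon as their biactive components
vanish. -/
lemma mem_tangentR_of_tendsto [l.NeBot] (hX : Tendsto X l (𝓝 xb)) (hY : Tendsto Y l (𝓝 yb))
    (hA : ∀ᶠ k in l, Aligned D (t k) (X k) (Y k) xb yb Mb) (hu : Tendsto u l (𝓝 ξ))
    (huT : ∀ᶠ k in l, u k ∈ tangentS D (t k) (X k) (Y k))
    (h01 : ∀ᶠ k in l, ∀ i ∈ a01 xb yb, i ∉ Hact (t k) (X k) (Y k) → (u k).1 i = 0)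
    (h00 : ∀ i ∈ a00 xb yb, ξ.1 i = 0 ∧ ξ.2 i = 0) : ξ ∈ tangentR D xb yb := by
  have hXi := tendsto_pi_nhds.1 hX
  have hYi := tendsto_pi_nhds.1 hY
  have hu1 := tendsto_pi_nhds.1 ((continuous_fst.tendsto ξ).comp hu)
  have hu2 := tendsto_pi_nhds.1 ((continuous_snd.tendsto ξ).comp hu)
  simp only [Function.comp_apply] at hu1 hu2
  have hdot : ∀ φ : Vec n → ℝ, ContDiff ℝ 2 φ →
      (∀ᶠ k in l, dot (grad φ (X k)) (u k).1 = 0) → dot (grad φ xb) ξ.1 = 0 := fun φ hφ h => by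
    have hg := tendsto_pi_nhds.1 (((continuous_grad hφ).tendsto xb).comp hX)
    exact tendsto_nhds_unique_of_eventuallyEq
      (tendsto_finsetSum _ fun i _ => (hg i).mul (hu1 i)) tendsto_const_nhds h
  refine ⟨fun p => hdot _ (D.hh p) (huT.mono fun k hk => hk.1 p),
    fun q hq => hdot _ (D.hg q) ?_, fun i hi => ?_, fun _ => ?_, fun i hi => ?_, fun i hi => ?_⟩
  · filter_upwards [huT, hA] with k hk hAk
    exact hk.2.1 q (hAk.Q0_eq ▸ hq)
  · refine tendsto_nhds_unique_of_eventuallyEq (hu2 i) tendsto_const_nhds ?_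
    filter_upwards [huT, hA] with k hk hAk
    exact hk.2.2.1 i (hAk.Eact_eq ▸ hi)
  · refine tendsto_nhds_unique_of_eventuallyEq (tendsto_finsetSum _ fun i _ => hu2 i)
      tendsto_const_nhds ?_
    filter_upwards [huT, hA] with k hk hAk
    exact hk.2.2.2.1 hAk.sum_eq
  · rcases Finset.mem_union.1 hi with hi | hi
    · exact (h00 i hi).1
    · have hi' := hi
      simp only [a01, Finset.mem_filter] at hi'
      have key : (yb i * ξ.1 i) * (yb i * ξ.1 i + xb i * ξ.2 i) = 0 := by
        refine tendsto_nhds_unique_of_eventuallyEq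
          (((hYi i).mul (hu1 i)).mul (((hYi i).mul (hu1 i)).add ((hXi i).mul (hu2 i))))
          tendsto_const_nhds ?_
        filter_upwards [huT, h01] with k hk h01k
        by_cases hH : i ∈ Hact (t k) (X k) (Y k)
        · rw [hk.2.2.2.2.1 i hH, mul_zero]
        · simp [h01k i hi hH]
      rw [hi'.2.1] at key
      simpa [hi'.2.2.ne'] using key
  · rcases Finset.mem_union.1 hi with hi | hi
    · exact (h00 i hi).2
    · have hi' := hi
      simp only [a10, Finset.mem_filter] at hi'
      have key : yb i * ξ.1 i + xb i * ξ.2 i = 0 := by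
        refine tendsto_nhds_unique_of_eventuallyEq
          (((hYi i).mul (hu1 i)).add ((hXi i).mul (hu2 i))) tendsto_const_nhds ?_
        filter_upwards [huT, hA] with k hk hAk
        rcases hAk.a10_act i hi with hH | hN
        · exact hk.2.2.2.2.1 i hH
        · simp [hN, hk.2.2.2.2.2 i (by simp [Nact, hN])]
      rw [hi'.2.2] at key
      simpa [hi'.2.1] using key

lemma tendsto_hessX_fst (hl : l ≤ atTop) (hX : Tendsto X l (𝓝 xb))
    (hA : ∀ᶠ k in l, Aligned D (t k) (X k) (Y k) xb yb Mb)
    (hM : MultLimits D t X Y Mk xb yb Mb) (hu : Tendsto u l (𝓝 ξ)) :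
    Tendsto (fun k => hessX D (Q0 D (X k)) (Mk k).lam (Mk k).mu1 (X k) (u k).1 (u k).1) l
      (𝓝 (bilR D xb Mb ξ ξ)) := by
  have h := tendsto_hessX D (Q0 D xb) (fun p => (hM.lam p).mono_left hl)
    (fun q hq => (hM.mu1 q hq).mono_left hl) hX ((continuous_fst.tendsto ξ).comp hu)
  refine h.congr' ?_
  filter_upwards [hA] with k hAk
  have e : hessX D (Q0 D xb) (Mk k).lam (fun q => if q ∈ Q0 D (X k) then (Mk k).mu1 q else 0)
      (X k) = hessX D (Q0 D (X k)) (Mk k).lam (Mk k).mu1 (X k) := by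
    rw [← hAk.Q0_eq]
    unfold hessX
    congr 1
    exact Finset.sum_congr rfl fun q hq => by simp [hq]
  simp only [Function.comp_apply, e]

/-- Outside the biactive indices, the complementarity part of the Hessian of `L^S` vanishes in
the limit. -/
lemma tendsto_eta_mul_mul (hl : l ≤ atTop) (hX : Tendsto X l (𝓝 xb)) (hY : Tendsto Y l (𝓝 yb))
    (hA : ∀ᶠ k in l, Aligned D (t k) (X k) (Y k) xb yb Mb)
    (hM : MultLimits D t X Y Mk xb yb Mb) (hu : Tendsto u l (𝓝 ξ))
    (huT : ∀ᶠ k in l, u k ∈ tangentS D (t k) (X k) (Y k)) {i : Fin n}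
    (hi : i ∈ a01 xb yb ∪ a10 xb yb) :
    Tendsto (fun k => eta (t k) (X k) (Y k) (Mk k) i * ((u k).1 i * (u k).2 i)) l (𝓝 0) := by
  have hXi := tendsto_pi_nhds.1 hX i
  have hYi := tendsto_pi_nhds.1 hY i
  have hu1 := tendsto_pi_nhds.1 ((continuous_fst.tendsto ξ).comp hu) i
  have hu2 := tendsto_pi_nhds.1 ((continuous_snd.tendsto ξ).comp hu) i
  simp only [Function.comp_apply] at hu1 hu2
  rcases Finset.mem_union.1 hi with hi | hi
  · have hi' := hi
    simp only [a01, Finset.mem_filter] at hi'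
    have h1 := (((((hM.sig1 i hi).mono_left hl).mul hXi).mul (hu2.pow 2)).neg).div
      (hYi.pow 2) (pow_ne_zero 2 hi'.2.2.ne')
    simp only [hi'.2.1, mul_zero, zero_mul, neg_zero, zero_div] at h1
    refine h1.congr' ?_
    filter_upwards [hA, huT] with k hAk hk
    have hy := (hAk.a01_pos i hi).ne'
    simp only [Pi.div_apply]
    rw [div_eq_iff (pow_ne_zero 2 hy)]
    linear_combination (-Y k i) * eta_mul_snd (Mk k) hk i
  · have hi' := hi
    simp only [a10, Finset.mem_filter] at hi'
    have h1 := ((((hYi.mul ((hM.sig2 i hi).mono_left hl)).mul (hu1.pow 2)).neg)).div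
      (hXi.pow 2) (pow_ne_zero 2 hi'.2.1)
    simp only [hi'.2.2, zero_mul, neg_zero, zero_div] at h1
    refine h1.congr' ?_
    filter_upwards [hA, huT] with k hAk hk
    have hx := hAk.a10_ne i hi
    simp only [Pi.div_apply]
    rw [div_eq_iff (pow_ne_zero 2 hx)]
    have hN : Y k i * (if i ∈ Nact (Y k) then (Mk k).nu i else 0) = 0 := by
      by_cases h : Y k i = 0 <;> simp [Nact, h]
    linear_combination (-X k i) * eta_mul_fst (Mk k) hk i - (u k).1 i ^ 2 * hN

/-- Limits of tangent directions along which the Hessian of `L^S` is nonnegative have vanishing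
biactive components. -/
lemma biactive_eq_zero_of_tendsto [l.NeBot] (hl : l ≤ atTop) (ht : ∀ k, 0 < t k)
    (hK : ∀ k, KKTAt D (t k) (X k) (Y k) (Mk k)) (hX : Tendsto X l (𝓝 xb))
    (hY : Tendsto Y l (𝓝 yb)) (hT : NondegTStatAt D xb yb Mb)
    (hA : ∀ᶠ k in l, Aligned D (t k) (X k) (Y k) xb yb Mb)
    (hM : MultLimits D t X Y Mk xb yb Mb) (hu : Tendsto u l (𝓝 ξ))
    (huT : ∀ᶠ k in l, u k ∈ tangentS D (t k) (X k) (Y k))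
    (hnn : ∀ᶠ k in l, 0 ≤ bilS D (t k) (X k) (Y k) (Mk k) (u k) (u k)) :
    (∀ i ∈ a00 xb yb, ξ.1 i = 0 ∧ ξ.2 i = 0) ∧ 0 ≤ bilR D xb Mb ξ ξ := by
  have hXi := tendsto_pi_nhds.1 hX
  have hYi := tendsto_pi_nhds.1 hY
  have hu1 := tendsto_pi_nhds.1 ((continuous_fst.tendsto ξ).comp hu)
  have hu2 := tendsto_pi_nhds.1 ((continuous_snd.tendsto ξ).comp hu)
  simp only [Function.comp_apply] at hu1 hu2
  have hq := tendsto_hessX_fst hl hX hA hM hu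
  have hbd : ∀ᶠ k in l, ∀ i, 0 ≤ eta (t k) (X k) (Y k) (Mk k) i * ((u k).1 i * (u k).2 i) ∧
      2 * (eta (t k) (X k) (Y k) (Mk k) i * ((u k).1 i * (u k).2 i)) ≤
        hessX D (Q0 D (X k)) (Mk k).lam (Mk k).mu1 (X k) (u k).1 (u k).1 := by
    filter_upwards [huT, hnn] with k hk hnk i
    have hτ := fun j => (hK k).eta_mul_mul_nonneg (ht k) hk j
    rw [bilS_self] at hnk
    refine ⟨hτ i, ?_⟩
    have := Finset.single_le_sum (fun j _ => hτ j) (Finset.mem_univ i)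
    linarith
  refine ⟨fun i hi => ?_, ?_⟩
  · have hi' := hi
    simp only [a00, Finset.mem_filter] at hi'
    obtain ⟨hr1, hr2⟩ := hT.2.2.2.2.2.1 i hi
    constructor
    · have h1 := (((hM.rho1 i hi).mono_left hl).mul ((hu1 i).pow 2)).const_mul 2 |>.abs
      have h2 := (hXi i).abs.mul hq
      rw [hi'.2.1, abs_zero, zero_mul] at h2
      have h3 := le_of_tendsto_of_tendsto h1 h2 (by
        filter_upwards [huT, hbd] with k hk hb
        obtain ⟨b1, b2⟩ := hb i
        have e := eta_mul_fst (Mk k) hk i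
        have e' : 2 * (eta (t k) (X k) (Y k) (Mk k) i * Y k i * (u k).1 i ^ 2) =
            X k i * -(2 * (eta (t k) (X k) (Y k) (Mk k) i * ((u k).1 i * (u k).2 i))) := by
          linear_combination 2 * e
        rw [e', abs_mul, abs_neg, abs_of_nonneg (by positivity : (0 : ℝ) ≤ 2 * _)]
        exact mul_le_mul_of_nonneg_left b2 (abs_nonneg _))
      have h4 := abs_nonpos_iff.1 h3
      simpa [hr1] using h4
    · have h1 := ((((hM.rho2 i hi).mono_left hl).mul ((hu2 i).pow 2)).const_mul 2).neg
      have h2 := (hYi i).mul hq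
      rw [hi'.2.2, zero_mul] at h2
      have h3 := le_of_tendsto_of_tendsto h1 h2 (by
        filter_upwards [huT, hbd, hA] with k hk hb hAk
        obtain ⟨b1, b2⟩ := hb i
        have hy : Y k i ≠ 0 :=
          right_ne_zero_of_mul (mul_ne_zero_of_mem_Hact (ht k) (hAk.a00_act i hi))
        have hN : i ∉ Nact (Y k) := by simp [Nact, hy]
        obtain ⟨⟨-, -, -, -, hYk⟩, -⟩ := hK k
        have e := eta_mul_snd (Mk k) hk i
        have := mul_le_mul_of_nonneg_left b2 (hYk i).1
        rw [if_neg hN]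
        linarith)
      have h4 : ξ.2 i ^ 2 ≤ 0 := by
        by_contra! h5
        nlinarith
      exact pow_eq_zero_iff two_ne_zero |>.1 (le_antisymm h4 (sq_nonneg _))
  · refine ge_of_tendsto hq ?_
    filter_upwards [hbd] with k hb
    have i0 : Fin n := ⟨0, D.hn⟩
    linarith [(hb i0).1, (hb i0).2]

end LimitDirections

section IndexBounds

variable {D : Setting n P Q} {t : ℕ → ℝ} {X Y : ℕ → Vec n} {Mk : ℕ → SMult n P Q}
  {xb yb : Vec n} {Mb : TMult n P Q}

lemma QIdx_eq_finrank {s : ℝ} {x y : Vec n} {M : SMult n P Q}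
    {W : Submodule ℝ (Vec n × Vec n)} (hWT : W ≤ tangentS D s x y)
    (hneg : ∀ ξ ∈ W, ξ ≠ 0 → bilS D s x y M ξ ξ < 0)
    (hmax : ∀ W' : Submodule ℝ (Vec n × Vec n), W' ≤ tangentS D s x y →
      (∀ ξ ∈ W', ξ ≠ 0 → bilS D s x y M ξ ξ < 0) →
      Module.finrank ℝ W' ≤ Module.finrank ℝ W) :
    QIdx D s x y M = Module.finrank ℝ W :=
  negIndex_eq_finrank (T := tangentS D s x y) (fun ξ => by
    rw [hess_LagS, bilS_apply]
    congr 1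
    exact Finset.sum_congr rfl fun i _ => by ring) (fun _ => Iff.rfl) hWT hneg hmax

lemma exists_splitting (hT : NondegTStatAt D xb yb Mb) :
    ∃ W V : Submodule ℝ (Vec n × Vec n),
      negIndex (hess (LagR D xb yb Mb) (xb, yb)) (inTR D xb yb) = Module.finrank ℝ W ∧
      Module.finrank ℝ V + Module.finrank ℝ W ≤ Module.finrank ℝ (tangentR D xb yb) ∧
      (∀ u ∈ tangentR D xb yb, (∀ w ∈ W, bilR D xb Mb u w = 0) → u ≠ 0 → 0 < bilR D xb Mb u u) ∧
      (∀ u ∈ tangentR D xb yb, (∀ v ∈ V, bilR D xb Mb u v = 0) → u ≠ 0 →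
        bilR D xb Mb u u < 0) := by
  obtain ⟨W, V, hWT, -, hneg, hmax, hdim, hpos, hneg'⟩ :=
    exists_neg_pos_splitting (bilR D xb Mb) (bilR_symm D xb Mb) (tangentR D xb yb)
      fun u hu h => hT.2.2.2.2.2.2 u hu fun ζ hζ => by
        rw [hess_LagR, ← bilR_apply, bilR_symm]
        exact h ζ hζ
  exact ⟨W, V, negIndex_eq_finrank (fun ξ => hess_LagR _ _ _ D xb yb Mb) (fun _ => Iff.rfl)
    hWT hneg hmax, hdim, hpos, hneg'⟩

lemma index_le_TIndex_add (ht : ∀ k, 0 < t k) (hK : ∀ k, KKTAt D (t k) (X k) (Y k) (Mk k))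
    {m : ℕ} (hQI : ∀ k, QIdx D (t k) (X k) (Y k) (Mk k) = m)
    (hX : Tendsto X atTop (𝓝 xb)) (hY : Tendsto Y atTop (𝓝 yb))
    (hT : NondegTStatAt D xb yb Mb) :
    m ≤ TIndex D xb yb Mb + ((a01 xb yb).filter fun i => Mb.sig1 i = 0).card := by
  have hM := tendsto_multipliers D t X Y Mk hK xb yb hX hY Mb hT.1 hT.2.1
  have hA := eventually_aligned hK hX hY hT hM
  obtain ⟨W, -, hW, -, hpos, -⟩ := exists_splitting hT
  set Z := (a01 xb yb).filter fun i => Mb.sig1 i = 0 with hZ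
  unfold TIndex
  rw [hW]
  by_contra! hlt
  obtain ⟨l, u, ξ, hl, hξ0, hu, hp⟩ := exists_unit_limit
    (fun k ξ => ξ ∈ tangentS D (t k) (X k) (Y k) ∧
      bilS D (t k) (X k) (Y k) (Mk k) ξ ξ ≤ 0 ∧ (∀ w ∈ W, bilR D xb Mb ξ w = 0) ∧
      ∀ i ∈ a00 xb yb ∪ Z, ξ.1 i = 0)
    (fun k ξ a ha ⟨h1, h2, h3, h4⟩ => ⟨Submodule.smul_mem _ a h1, by
      simp only [map_smul, _root_.smul_apply, smul_eq_mul]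
      exact mul_nonpos_of_nonneg_of_nonpos ha.le (mul_nonpos_of_nonneg_of_nonpos ha.le h2),
      fun w hw => by simp [h3 w hw], fun i hi => by simp [h4 i hi]⟩)
    (Eventually.of_forall fun k => by
      obtain ⟨Wk, hWT, hneg, hmax, -⟩ := exists_maximal_neg (bilS D (t k) (X k) (Y k) (Mk k))
        (bilS_symm D _ _ _ _) (tangentS D (t k) (X k) (Y k))
      have hm := (hQI k).symm.trans (QIdx_eq_finrank hWT hneg hmax)
      let b := Module.finBasis ℝ W
      let φ : Fin (Module.finrank ℝ W) ⊕ {i // i ∈ a00 xb yb ∪ Z} → Vec n × Vec n →ₗ[ℝ] ℝ :=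
        Sum.elim (fun j => ((bilR D xb Mb).flip (b j)).toLinearMap)
          (fun i => (coordX i.1).toLinearMap)
      obtain ⟨ξ, hξ, hξ0, h⟩ := exists_ne_zero_of_card_lt Wk φ (by
        have := Finset.card_union_le (a00 xb yb) Z
        simp only [Fintype.card_sum, Fintype.card_fin, Fintype.card_coe]
        omega)
      exact ⟨ξ, hξ0, hWT hξ, (hneg ξ hξ hξ0).le,
        forall_mem_eq_zero b (bilR D xb Mb ξ).toLinearMap fun j => h (.inl j),
        fun i hi => h (.inr ⟨i, hi⟩)⟩)
  have hX' := hX.mono_left hl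
  have hY' := hY.mono_left hl
  have hA' := hl hA
  have huT := hp.mono fun k hk => hk.1
  have h00 : ∀ᶠ k in (l : Filter ℕ), ∀ i ∈ a00 xb yb, (u k).1 i = 0 :=
    hp.mono fun k hk i hi => hk.2.2.2 i (Finset.mem_union_left _ hi)
  have hu1 := tendsto_pi_nhds.1 ((continuous_fst.tendsto ξ).comp hu)
  have hu2 := tendsto_pi_nhds.1 ((continuous_snd.tendsto ξ).comp hu)
  simp only [Function.comp_apply] at hu1 hu2
  have hξ : ξ ∈ tangentR D xb yb := by
    refine mem_tangentR_of_tendsto hX' hY' hA' hu huT ?_ fun i hi => ⟨?_, ?_⟩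
    · filter_upwards [hp, hA'] with k hk hAk i hi hH
      refine hk.2.2.2 i (Finset.mem_union_right _ (Finset.mem_filter.2 ⟨hi, ?_⟩))
      by_contra h
      exact hH (hAk.a01_act i hi h)
    · exact tendsto_nhds_unique_of_eventuallyEq (hu1 i) tendsto_const_nhds
        (h00.mono fun k hk => hk i hi)
    · refine tendsto_nhds_unique_of_eventuallyEq (hu2 i) tendsto_const_nhds ?_
      filter_upwards [huT, h00, hA'] with k hk h0 hAk
      have hH := hAk.a00_act i hi
      have h1 := hk.2.2.2.2.1 i hH
      rw [h0 i hi, mul_zero, zero_add] at h1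
      exact (mul_eq_zero.1 h1).resolve_left
        (left_ne_zero_of_mul (mul_ne_zero_of_mem_Hact (ht k) hH))
  have hB : bilR D xb Mb ξ ξ ≤ 0 := by
    have hτ : Tendsto (fun k => ∑ i, eta (t k) (X k) (Y k) (Mk k) i * ((u k).1 i * (u k).2 i)) l
        (𝓝 (∑ _ : Fin n, 0)) := tendsto_finsetSum _ fun i _ => by
      rcases mem_trichotomy hT.1.1.2.2.2.1 (fun i => (hT.1.1.2.2.2.2 i).1) i with h | h | h
      · exact tendsto_eta_mul_mul hl hX' hY' hA' hM hu huT (Finset.mem_union_left _ h.2.2.1)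
      · exact tendsto_eta_mul_mul hl hX' hY' hA' hM hu huT
          (Finset.mem_union_right _ h.2.2.2.1)
      · exact tendsto_const_nhds.congr' (h00.mono fun k hk => by simp [hk i h.2.2.2.2])
    have hS := (tendsto_hessX_fst hl hX' hA' hM hu).sub (hτ.const_mul 2)
    rw [Finset.sum_const_zero, mul_zero, sub_zero] at hS
    refine le_of_tendsto hS (hp.mono fun k hk => ?_)
    rw [← bilS_self]
    exact hk.2.1
  have hB0 : ∀ w ∈ W, bilR D xb Mb ξ w = 0 := fun w hw => by
    have h1 : Tendsto (fun k => bilR D xb Mb (u k) w) l (𝓝 (bilR D xb Mb ξ w)) :=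
      (((bilR D xb Mb).flip w).continuous.tendsto ξ).comp hu
    exact tendsto_nhds_unique_of_eventuallyEq h1 tendsto_const_nhds
      (hp.mono fun k hk => hk.2.2.1 w hw)
  exact absurd (hpos ξ hξ hB0 hξ0) (not_lt.2 hB)

lemma TIndex_le_index (ht : ∀ k, 0 < t k) (hK : ∀ k, KKTAt D (t k) (X k) (Y k) (Mk k))
    {m : ℕ} (hQI : ∀ k, QIdx D (t k) (X k) (Y k) (Mk k) = m)
    (hX : Tendsto X atTop (𝓝 xb)) (hY : Tendsto Y atTop (𝓝 yb))
    (hT : NondegTStatAt D xb yb Mb) : TIndex D xb yb Mb ≤ m := by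
  have hM := tendsto_multipliers D t X Y Mk hK xb yb hX hY Mb hT.1 hT.2.1
  have hA := eventually_aligned hK hX hY hT hM
  obtain ⟨W, V, hW, hdim, -, hneg⟩ := exists_splitting hT
  unfold TIndex
  rw [hW]
  by_contra! hlt
  obtain ⟨l, u, ξ, hl, hξ0, hu, hp⟩ := exists_unit_limit
    (fun k ξ => ξ ∈ tangentS D (t k) (X k) (Y k) ∧
      0 ≤ bilS D (t k) (X k) (Y k) (Mk k) ξ ξ ∧ (∀ v ∈ V, bilR D xb Mb ξ v = 0) ∧
      ∀ i ∈ a01 xb yb, i ∉ Hact (t k) (X k) (Y k) → ξ.1 i = 0)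
    (fun k ξ a ha ⟨h1, h2, h3, h4⟩ => ⟨Submodule.smul_mem _ a h1, by
      simp only [map_smul, _root_.smul_apply, smul_eq_mul]
      positivity,
      fun w hw => by simp [h3 w hw], fun i hi hH => by simp [h4 i hi hH]⟩)
    (hA.mono fun k hAk => by
      obtain ⟨Wk, hWT, hneg, hmax, hnn⟩ := exists_maximal_neg
        (bilS D (t k) (X k) (Y k) (Mk k)) (bilS_symm D _ _ _ _) (tangentS D (t k) (X k) (Y k))
      have hm := (hQI k).symm.trans (QIdx_eq_finrank hWT hneg hmax)
      let b := Module.finBasis ℝ V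
      let b' := Module.finBasis ℝ Wk
      let d (v : Vec n) : Vec n × Vec n →ₗ[ℝ] ℝ := ∑ i, v i • (coordX i).toLinearMap
      have hd : ∀ v ξ, d v ξ = dot v ξ.1 := fun v ξ => by simp [d, dot]
      let e (i : Fin n) : Vec n × Vec n →ₗ[ℝ] ℝ :=
        if i ∈ Hact (t k) (X k) (Y k) then
          Y k i • (coordX i).toLinearMap + X k i • (coordY i).toLinearMap
        else if i ∈ a01 xb yb then (coordX i).toLinearMap else (coordY i).toLinearMap
      let φ : P ⊕ {q // q ∈ Q0 D xb} ⊕ {i // i ∈ Eact D yb} ⊕ Unit ⊕ Fin n ⊕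
          Fin (Module.finrank ℝ V) ⊕ Fin (Module.finrank ℝ Wk) → Vec n × Vec n →ₗ[ℝ] ℝ :=
        Sum.elim (fun p => d (grad (D.h p) (X k))) <|
          Sum.elim (fun q => d (grad (D.g q) (X k))) <|
          Sum.elim (fun i => (coordY i.1).toLinearMap) <|
          Sum.elim (fun _ => ∑ i, (coordY i).toLinearMap) <| Sum.elim e <|
          Sum.elim (fun j => ((bilR D xb Mb).flip (b j)).toLinearMap)
            (fun j => ((bilS D (t k) (X k) (Y k) (Mk k)).flip (b' j)).toLinearMap)
      obtain ⟨ξ, -, hξ0, h⟩ := exists_ne_zero_of_card_lt ⊤ φ (by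
        have h1 := finrank_tangentR_add_card_le hT.2.1 hT.1.sum_eq
        rw [card_ActIdx D hT.1.1.2.2.2.1 fun i => (hT.1.1.2.2.2.2 i).1] at h1
        simp only [Fintype.card_sum, Fintype.card_fin, Fintype.card_coe, Fintype.card_unit,
          finrank_top]
        omega)
      have he : ∀ i, e i ξ = 0 := fun i => h (.inr (.inr (.inr (.inr (.inl i)))))
      have hξ : ξ ∈ tangentS D (t k) (X k) (Y k) := by
        refine ⟨fun p => (hd _ ξ).symm.trans (h (.inl p)), fun q hq => (hd _ ξ).symm.trans
          (h (.inr (.inl ⟨q, hAk.Q0_eq ▸ hq⟩))), fun i hi =>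
          h (.inr (.inr (.inl ⟨i, hAk.Eact_eq ▸ hi⟩))), fun _ => ?_, fun i hi => ?_,
          fun i hi => ?_⟩
        · simpa using (show (∑ i, (coordY i).toLinearMap) ξ = (0 : ℝ) from
            h (.inr (.inr (.inr (.inl ())))))
        · simpa [e, hi] using he i
        · have hi' : Y k i = 0 := by simpa [Nact] using hi
          have hH : i ∉ Hact (t k) (X k) (Y k) := fun hH =>
            mul_ne_zero_of_mem_Hact (ht k) hH (by rw [hi', mul_zero])
          have h01 : i ∉ a01 xb yb := fun h01 => (hAk.a01_pos i h01).ne' hi'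
          simpa [e, hH, h01] using he i
      exact ⟨ξ, hξ0, hξ, hnn ξ hξ (forall_mem_eq_zero b'
          (bilS D (t k) (X k) (Y k) (Mk k) ξ).toLinearMap
          fun j => h (.inr (.inr (.inr (.inr (.inr (.inr j))))))),
        forall_mem_eq_zero b (bilR D xb Mb ξ).toLinearMap
          fun j => h (.inr (.inr (.inr (.inr (.inr (.inl j)))))),
        fun i hi hH => by simpa [e, hH, hi] using he i⟩)
  have hX' := hX.mono_left hl
  have hY' := hY.mono_left hl
  have hA' := hl hA
  have huT := hp.mono fun k hk => hk.1
  obtain ⟨h00, hnn⟩ := biactive_eq_zero_of_tendsto hl ht hK hX' hY' hT hA' hM hu huT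
    (hp.mono fun k hk => hk.2.1)
  have hξ : ξ ∈ tangentR D xb yb := mem_tangentR_of_tendsto hX' hY' hA' hu huT
    (hp.mono fun k hk => hk.2.2.2) h00
  have hB0 : ∀ v ∈ V, bilR D xb Mb ξ v = 0 := fun v hv => by
    have h1 : Tendsto (fun k => bilR D xb Mb (u k) v) l (𝓝 (bilR D xb Mb ξ v)) :=
      (((bilR D xb Mb).flip v).continuous.tendsto ξ).comp hu
    exact tendsto_nhds_unique_of_eventuallyEq h1 tendsto_const_nhds
      (hp.mono fun k hk => hk.2.2.1 v hv)
  exact absurd (hneg ξ hξ hB0 hξ0) (not_lt.2 hnn)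

end IndexBounds

/-- Theorem 3: if nondegenerate KKT points of S(t_k) with
quadratic index m converge to a nondegenerate T-stationary point of R with
T-index TI, then max{m − |{i ∈ a01 : σ̄₁ᵢ = 0}|, 0} ≤ TI ≤ m (with truncated
natural subtraction realizing the max with 0). -/
theorem statement14 {n : ℕ} {P Q : Type*} [Fintype P] [Fintype Q]
    (D : Setting n P Q) (t : ℕ → ℝ) (htpos : ∀ k, 0 < t k)
    (ht0 : Filter.Tendsto t Filter.atTop (nhds 0))
    (X Y : ℕ → Vec n) (Mk : ℕ → SMult n P Q)
    (hK : ∀ k, NondegKKTAt D (t k) (X k) (Y k) (Mk k))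
    (m : ℕ) (hQI : ∀ k, QIdx D (t k) (X k) (Y k) (Mk k) = m)
    (xb yb : Vec n)
    (hconv : Filter.Tendsto (fun k => ((X k, Y k) : Vec n × Vec n))
      Filter.atTop (nhds (xb, yb)))
    (Mb : TMult n P Q) (hnd : NondegTStatAt D xb yb Mb) :
    m - ((a01 xb yb).filter fun i => Mb.sig1 i = 0).card ≤ TIndex D xb yb Mb ∧
    TIndex D xb yb Mb ≤ m := by
  have hX : Tendsto X atTop (𝓝 xb) := (continuous_fst.tendsto _).comp hconv
  have hY : Tendsto Y atTop (𝓝 yb) := (continuous_snd.tendsto _).comp hconv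
  have hK' := fun k => (hK k).1
  exact ⟨Nat.sub_le_of_le_add (index_le_TIndex_add htpos hK' hQI hX hY hnd),
    TIndex_le_index htpos hK' hQI hX hY hnd⟩

end Scholtes
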